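/- arXiv:0709.0402 — 8 statements merged into one kernel-verified Lean document; each statement's English description precedes it below -/
import Mathlib

section
/- Let x : [0, ∞) → ℝ be a continuous function. For ε > 0 and t ≥ 0 define J_ε(t) = (1/ε) ∫_0^t (1_{x(s+ε) > 0} − 1_{x(s) > 0})(x(s+ε) − x(s)) ds, I³_ε(t) = (1/ε) ∫_0^t [x((u+ε) ∧ t)⁺ 1_{x(u) ≤ 0} + x((u+ε) ∧ t)⁻ 1_{x(u) > 0}] du, and I⁴_ε(t) = (1/ε) ∫_0^t [x(u)⁻ 1_{x((u+ε) ∧ t) > 0} + x(u)⁺ 1_{x((u+ε) ∧ t) ≤ 0}] du. Then for every T > 0, sup_{t ∈ [0,T]} |J_ε(t) − I³_ε(t) − I⁴_ε(t)| tends to 0 as ε → 0⁺. -/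
open MeasureTheory Set Filter

/-!
Where `s + ε ≤ t` the truncation `(s + ε) ∧ t` is inactive, and there the identity
`(1_{b > 0} - 1_{a > 0}) (b - a) = [b⁺ 1_{a ≤ 0} + b⁻ 1_{a > 0}] + [a⁻ 1_{b > 0} + a⁺ 1_{b ≤ 0}]`
makes the integrand of `J_ε` the sum of those of `I³_ε` and `I⁴_ε`. Hence only the times
`s ∈ (t - ε, t]` contribute to `J_ε(t) - I³_ε(t) - I⁴_ε(t)`. On this interval of length at most `ε`
both sides of the identity lie between `0` and the oscillation of `x` over a step of size `ε`, so
after division by `ε` the error is at most that oscillation, which tends to `0` uniformly in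
`t ∈ [0, T]`.
-/

open scoped Topology

section Crossing

/-- The size of the jump from `a` to `b` if it crosses the level `0`, and `0` otherwise, where
the level itself counts as nonpositive. This is the integrand of `J_ε`. -/
noncomputable def crossing (a b : ℝ) : ℝ :=
  ((if 0 < b then (1 : ℝ) else 0) - (if 0 < a then 1 else 0)) * (b - a)

/-- The distance from the level `0` to the endpoint `b` of a jump from `a` to `b` crossing `0`.
This is the integrand of `I³_ε`. -/
noncomputable def overshoot (a b : ℝ) : ℝ :=
  max b 0 * (if a ≤ 0 then (1 : ℝ) else 0) + max (-b) 0 * (if 0 < a then 1 else 0)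

/-- The distance from the starting point `a` to the level `0` of a jump from `a` to `b`
crossing `0`. This is the integrand of `I⁴_ε`. -/
noncomputable def undershoot (a b : ℝ) : ℝ :=
  max (-a) 0 * (if 0 < b then (1 : ℝ) else 0) + max a 0 * (if b ≤ 0 then 1 else 0)

lemma undershoot_eq_overshoot_swap (a b : ℝ) : undershoot a b = overshoot b a :=
  add_comm _ _

lemma overshoot_of_nonpos {a : ℝ} (ha : a ≤ 0) (b : ℝ) : overshoot a b = max b 0 := by
  simp [overshoot, ha, ha.not_gt]

lemma overshoot_of_pos {a : ℝ} (ha : 0 < a) (b : ℝ) : overshoot a b = max (-b) 0 := by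
  simp [overshoot, ha, ha.not_ge]

lemma abs_overshoot_le (a b : ℝ) : |overshoot a b| ≤ |b| := by
  rcases le_or_gt a 0 with ha | ha
  · rw [overshoot_of_nonpos ha]
    exact abs_max_le_max_abs_abs.trans (by simp)
  · rw [overshoot_of_pos ha]
    exact abs_max_le_max_abs_abs.trans (by simp)

lemma crossing_eq_overshoot_add_undershoot (a b : ℝ) :
    crossing a b = overshoot a b + undershoot a b := by
  rw [undershoot_eq_overshoot_swap]
  rcases le_or_gt a 0 with ha | ha <;> rcases le_or_gt b 0 with hb | hb
  · simp [crossing, overshoot_of_nonpos, ha, hb, ha.not_gt, hb.not_gt]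
  · simp [crossing, overshoot_of_nonpos, overshoot_of_pos, ha, hb, ha.not_gt, hb.le, sub_eq_add_neg]
  · simp [crossing, overshoot_of_nonpos, overshoot_of_pos, ha, hb, hb.not_gt, ha.le,
      sub_eq_neg_add]
  · simp [crossing, overshoot_of_pos, ha, hb, ha.le, hb.le]

lemma crossing_nonneg (a b : ℝ) : 0 ≤ crossing a b := by
  unfold crossing
  split_ifs <;> linarith

lemma crossing_le_abs_sub (a b : ℝ) : crossing a b ≤ |b - a| := by
  unfold crossing
  split_ifs <;> linarith [le_abs_self (b - a), neg_le_abs (b - a), abs_nonneg (b - a)]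

lemma measurable_overshoot : Measurable fun p : ℝ × ℝ => overshoot p.1 p.2 := by
  have hpos : MeasurableSet {p : ℝ × ℝ | 0 < p.1} :=
    measurableSet_lt measurable_const measurable_fst
  have hnonpos : MeasurableSet {p : ℝ × ℝ | p.1 ≤ 0} :=
    measurableSet_le measurable_fst measurable_const
  exact ((measurable_snd.max measurable_const).mul
      (measurable_const.ite hnonpos measurable_const)).add
    ((measurable_snd.neg.max measurable_const).mul (measurable_const.ite hpos measurable_const))

variable {μ : Measure ℝ} {f g : ℝ → ℝ} {a b : ℝ}

lemma intervalIntegrable_overshoot (hf : IntervalIntegrable f μ a b)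
    (hg : IntervalIntegrable g μ a b) :
    IntervalIntegrable (fun s => overshoot (f s) (g s)) μ a b :=
  hg.mono_fun
    (measurable_overshoot.comp_aemeasurable
      (hf.aestronglyMeasurable_restrict_uIoc.aemeasurable.prodMk
        hg.aestronglyMeasurable_restrict_uIoc.aemeasurable)).aestronglyMeasurable
    (Eventually.of_forall fun s => abs_overshoot_le (f s) (g s))

lemma intervalIntegrable_undershoot (hf : IntervalIntegrable f μ a b)
    (hg : IntervalIntegrable g μ a b) :
    IntervalIntegrable (fun s => undershoot (f s) (g s)) μ a b := by
  simpa only [undershoot_eq_overshoot_swap] using intervalIntegrable_overshoot hg hf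

lemma intervalIntegrable_crossing (hf : IntervalIntegrable f μ a b)
    (hg : IntervalIntegrable g μ a b) :
    IntervalIntegrable (fun s => crossing (f s) (g s)) μ a b := by
  simpa only [crossing_eq_overshoot_add_undershoot] using
    (intervalIntegrable_overshoot hf hg).add (intervalIntegrable_undershoot hf hg)

end Crossing

section Analysis

lemma norm_integral_le_of_eq_zero_of_le_sub {E : Type*} [NormedAddCommGroup E] [NormedSpace ℝ E]
    {f : ℝ → E} {a b ε C : ℝ} (hab : a ≤ b) (hε : 0 ≤ ε) (hC : 0 ≤ C)
    (hzero : ∀ s ∈ Ioc a b, s ≤ b - ε → f s = 0)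
    (hbound : ∀ s ∈ Ioc a b, b - ε < s → ‖f s‖ ≤ C) :
    ‖∫ s in a..b, f s‖ ≤ C * ε := by
  have hsub : Ioc (max a (b - ε)) b ⊆ Ioc a b := Ioc_subset_Ioc_left (le_max_left _ _)
  have hrestrict : ∫ s in a..b, f s = ∫ s in Ioc (max a (b - ε)) b, f s := by
    rw [intervalIntegral.integral_of_le hab]
    refine setIntegral_eq_of_subset_of_forall_sdiff_eq_zero measurableSet_Ioc hsub ?_
    rintro s ⟨hs, hs'⟩
    exact hzero s hs (not_lt.1 fun h => hs' ⟨max_lt hs.1 h, hs.2⟩)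
  have hlength : volume.real (Ioc (max a (b - ε)) b) ≤ ε := by
    rw [Real.volume_real_Ioc]
    exact max_le (by linarith [le_max_right a (b - ε)]) hε
  calc ‖∫ s in a..b, f s‖ = ‖∫ s in Ioc (max a (b - ε)) b, f s‖ := by rw [hrestrict]
    _ ≤ C * volume.real (Ioc (max a (b - ε)) b) :=
      norm_setIntegral_le_of_norm_le_const measure_Ioc_lt_top fun s hs =>
        hbound s (hsub hs) ((le_max_right _ _).trans_lt hs.1)
    _ ≤ C * ε := by gcongr

lemma eventually_forall_dist_le_of_continuousOn_Ici {E : Type*} [PseudoMetricSpace E] {x : ℝ → E}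
    {a : ℝ} (hx : ContinuousOn x (Ici a)) (T : ℝ) {δ : ℝ} (hδ : 0 < δ) :
    ∀ᶠ ε in 𝓝 (0 : ℝ), ∀ s ∈ Icc a T, ∀ r ∈ Icc s (s + ε), dist (x r) (x s) ≤ δ := by
  have hunif : UniformContinuousOn x (Icc a (T + 1)) :=
    isCompact_Icc.uniformContinuousOn_of_continuous (hx.mono Icc_subset_Ici_self)
  obtain ⟨η, hη, hclose⟩ := Metric.uniformContinuousOn_iff.1 hunif δ hδ
  filter_upwards [eventually_lt_nhds hη, eventually_lt_nhds one_pos] with ε hεη hε1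
  rintro s ⟨has, hsT⟩ r ⟨hsr, hrs⟩
  refine (hclose r ⟨by linarith, by linarith⟩ s ⟨has, by linarith⟩ ?_).le
  rw [Real.dist_eq, abs_of_nonneg (sub_nonneg.2 hsr)]
  linarith

lemma tendsto_iSup_abs_of_tendstoUniformlyOn_zero {ι α : Type*} {F : ι → α → ℝ} {l : Filter ι}
    {s : Set α} (hF : TendstoUniformlyOn F 0 l s) :
    Tendsto (fun i => ⨆ t : s, |F i t|) l (𝓝 0) := by
  rw [Metric.tendsto_nhds]
  intro η hη
  filter_upwards [Metric.tendstoUniformlyOn_iff.1 hF (η / 2) (half_pos hη)] with i hi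
  have hsup : ⨆ t : s, |F i t| ≤ η / 2 :=
    Real.iSup_le (fun t => by simpa using (hi t t.2).le) (half_pos hη).le
  rw [Real.dist_0_eq_abs, abs_of_nonneg (Real.iSup_nonneg fun _ => abs_nonneg _)]
  linarith

end Analysis

section RegularizationError

/-- The error `J_ε(t) - I³_ε(t) - I⁴_ε(t)`. Only the last two integrals truncate the shifted time
`s + ε` at `t`. -/
noncomputable def regularizationError (x : ℝ → ℝ) (ε t : ℝ) : ℝ :=
  (1 / ε) * (∫ s in (0 : ℝ)..t, crossing (x s) (x (s + ε)))
    - (1 / ε) * (∫ u in (0 : ℝ)..t, overshoot (x u) (x (min (u + ε) t)))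
    - (1 / ε) * (∫ u in (0 : ℝ)..t, undershoot (x u) (x (min (u + ε) t)))

variable {x : ℝ → ℝ} {ε t δ : ℝ}

lemma regularizationError_eq_integral (hx : ContinuousOn x (Ici 0)) (hε : 0 ≤ ε) (ht : 0 ≤ t) :
    regularizationError x ε t =
      (1 / ε) * ∫ s in (0 : ℝ)..t,
        (crossing (x s) (x (s + ε)) - crossing (x s) (x (min (s + ε) t))) := by
  have hint {φ : ℝ → ℝ} (hφ : Continuous φ) (hnonneg : ∀ s ∈ Icc 0 t, 0 ≤ φ s) :
      IntervalIntegrable (fun s => x (φ s)) volume 0 t :=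
    (hx.comp hφ.continuousOn hnonneg).intervalIntegrable_of_Icc ht
  have hnow : IntervalIntegrable x volume 0 t := hint continuous_id fun s hs => hs.1
  have hshift := hint (continuous_add_const ε) fun s hs => add_nonneg hs.1 hε
  have htrunc := hint ((continuous_add_const ε).min continuous_const) fun s hs =>
    le_min (add_nonneg hs.1 hε) ht
  rw [intervalIntegral.integral_sub (intervalIntegrable_crossing hnow hshift)
    (intervalIntegrable_crossing hnow htrunc)]
  simp only [crossing_eq_overshoot_add_undershoot _ (x (min _ t))]
  rw [intervalIntegral.integral_add (intervalIntegrable_overshoot hnow htrunc)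
    (intervalIntegrable_undershoot hnow htrunc), regularizationError]
  ring

lemma abs_regularizationError_le (hx : ContinuousOn x (Ici 0)) (hε : 0 < ε) (ht : 0 ≤ t)
    (hosc : ∀ s ∈ Icc 0 t, ∀ r ∈ Icc s (s + ε), |x r - x s| ≤ δ) :
    |regularizationError x ε t| ≤ δ := by
  have hδ : 0 ≤ δ := (abs_nonneg _).trans (hosc 0 ⟨le_rfl, ht⟩ 0 ⟨le_rfl, by linarith⟩)
  have hcrossing : ∀ s ∈ Icc 0 t, ∀ r ∈ Icc s (s + ε), crossing (x s) (x r) ≤ δ :=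
    fun s hs r hr => (crossing_le_abs_sub _ _).trans (hosc s hs r hr)
  have hintegral : |∫ s in (0 : ℝ)..t,
      (crossing (x s) (x (s + ε)) - crossing (x s) (x (min (s + ε) t)))| ≤ δ * ε := by
    rw [← Real.norm_eq_abs]
    refine norm_integral_le_of_eq_zero_of_le_sub ht hε.le hδ (fun s _ hs => ?_) fun s hs _ => ?_
    · rw [min_eq_left (le_sub_iff_add_le.1 hs), sub_self]
    · have hs' : s ∈ Icc 0 t := Ioc_subset_Icc_self hs
      have hstep : s ≤ s + ε := by linarith
      exact abs_sub_le_of_nonneg_of_le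
        (crossing_nonneg _ _) (hcrossing s hs' _ ⟨hstep, le_rfl⟩)
        (crossing_nonneg _ _) (hcrossing s hs' _ ⟨le_min hstep hs.2, min_le_left _ _⟩)
  rw [regularizationError_eq_integral hx hε.le ht, abs_mul, abs_of_pos (one_div_pos.2 hε), one_div,
    inv_mul_le_iff₀ hε, mul_comm ε]
  exact hintegral

lemma tendstoUniformlyOn_regularizationError (hx : ContinuousOn x (Ici 0)) (T : ℝ) :
    TendstoUniformlyOn (regularizationError x) 0 (𝓝[>] 0) (Icc 0 T) := by
  rw [Metric.tendstoUniformlyOn_iff]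
  intro η hη
  filter_upwards [self_mem_nhdsWithin, nhdsWithin_le_nhds
    (eventually_forall_dist_le_of_continuousOn_Ici hx T (half_pos hη))] with ε hε hosc t ht
  have hle : |regularizationError x ε t| ≤ η / 2 :=
    abs_regularizationError_le hx hε ht.1 fun s hs => hosc s ⟨hs.1, hs.2.trans ht.2⟩
  rw [Pi.zero_apply, dist_zero_left, Real.norm_eq_abs]
  linarith

end RegularizationError

/-- For a continuous function `x` on `[0,∞)`, with
`J_ε(t) = (1/ε) ∫_0^t (1_{x(s+ε)>0} − 1_{x(s)>0})(x(s+ε) − x(s)) ds`,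
`I³_ε(t) = (1/ε) ∫_0^t [x((u+ε)∧t)⁺ 1_{x(u)≤0} + x((u+ε)∧t)⁻ 1_{x(u)>0}] du`, and
`I⁴_ε(t) = (1/ε) ∫_0^t [x(u)⁻ 1_{x((u+ε)∧t)>0} + x(u)⁺ 1_{x((u+ε)∧t)≤0}] du`,
the quantity `sup_{t ∈ [0,T]} |J_ε(t) − I³_ε(t) − I⁴_ε(t)|` tends to `0` as `ε → 0⁺`,
for every `T > 0`. -/
theorem statement2 (x : ℝ → ℝ) (hx : ContinuousOn x (Ici 0)) (T : ℝ) (hT : 0 < T) :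
    Tendsto (fun ε : ℝ =>
        ⨆ t : Icc (0:ℝ) T,
          |(1 / ε) * (∫ s in (0:ℝ)..t,
              ((if 0 < x (s + ε) then (1:ℝ) else 0) - (if 0 < x s then 1 else 0))
                * (x (s + ε) - x s))
            - (1 / ε) * (∫ u in (0:ℝ)..t,
                (max (x (min (u + ε) t)) 0 * (if x u ≤ 0 then (1:ℝ) else 0)
                  + max (-(x (min (u + ε) t))) 0 * (if 0 < x u then 1 else 0)))
            - (1 / ε) * (∫ u in (0:ℝ)..t,
                (max (-(x u)) 0 * (if 0 < x (min (u + ε) t) then (1:ℝ) else 0)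
                  + max (x u) 0 * (if x (min (u + ε) t) ≤ 0 then 1 else 0)))|)
      (nhdsWithin 0 (Ioi 0)) (nhds 0) :=
  tendsto_iSup_abs_of_tendstoUniformlyOn_zero (tendstoUniformlyOn_regularizationError hx T)
end

section
/- Let T > 0 and let F : [0, T] → ℝ be a continuous nondecreasing function with F(0) = 0. Then sup_{t ∈ [0,T]} | (1/ε) ∫_0^t (F((u+ε) ∧ t) − F(u)) du − F(t) | tends to 0 as ε → 0⁺. Moreover, for every ε > 0 and t ∈ [0, T], (1/ε) ∫_0^t (F((u+ε) ∧ t) − F(u)) du = ∫_{(0,t]} (s ∧ ε)/ε dμ_F(s), where μ_F is the Lebesgue–Stieltjes measure associated with F. -/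
open MeasureTheory Set Filter

/-!
By Fubini on the band `u < s ≤ u + ε` in `(a, t]²`, the integral of the increments of `F` over
windows of length `ε` equals the integral of `min (s - a) ε` against `μ_F`: the slice of the band
at `u` has `μ_F`-mass `F (min (u + ε) t) - F u`, the slice at `s` has length `min (s - a) ε`.
After division by `ε` the integrand is `1` except on `(a, a + ε]`, so the regularization differs
from `F t - F a` by at most `F (a + ε) - F a`, whatever `t` is. This bound tends to `0` because
`μ_F` is continuous from above along the intervals `(a, a + ε]`, which shrink to `∅`.
-/

open scoped Topology

lemma integral_measureReal_prodMk_comm {α β : Type*} [MeasurableSpace α] [MeasurableSpace β]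
    (μ : Measure α) (ν : Measure β) [IsFiniteMeasure μ] [IsFiniteMeasure ν]
    {s : Set (α × β)} (hs : MeasurableSet s) :
    ∫ x, ν.real {y | (x, y) ∈ s} ∂μ = ∫ y, μ.real {x | (x, y) ∈ s} ∂ν := by
  have hint : Integrable (Function.uncurry fun x y ↦ s.indicator (1 : α × β → ℝ) (x, y))
      (μ.prod ν) := (integrable_const (1 : ℝ)).indicator hs
  calc ∫ x, ν.real {y | (x, y) ∈ s} ∂μ
      = ∫ x, ∫ y, s.indicator 1 (x, y) ∂ν ∂μ :=
        integral_congr_ae (.of_forall fun _ ↦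
          (integral_indicator_one (measurable_prodMk_left hs)).symm)
    _ = ∫ y, ∫ x, s.indicator 1 (x, y) ∂μ ∂ν := integral_integral_swap hint
    _ = ∫ y, μ.real {x | (x, y) ∈ s} ∂ν :=
        integral_congr_ae (.of_forall fun _ ↦
          integral_indicator_one (measurable_prodMk_right hs))

lemma tendsto_measure_Ioc_nhdsGT {α : Type*} [LinearOrder α] [DenselyOrdered α]
    [TopologicalSpace α] [OrderTopology α] [FirstCountableTopology α] [MeasurableSpace α]
    [OpensMeasurableSpace α] {μ : Measure α} {a b : α} (hab : a < b) (hμ : μ (Ioc a b) ≠ ⊤) :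
    Tendsto (fun x ↦ μ (Ioc a x)) (𝓝[>] a) (𝓝 0) := by
  have inter_empty : ⋂ x > a, Ioc a x = ∅ := by
    refine eq_empty_of_forall_notMem fun y hy ↦ ?_
    have mem_Ioc (x : α) (hx : a < x) : y ∈ Ioc a x := mem_iInter₂.1 hy x hx
    obtain ⟨z, haz, hzy⟩ := exists_between (mem_Ioc b hab).1
    exact hzy.not_ge (mem_Ioc z haz).2
  have h := tendsto_measure_biInter_gt (μ := μ) (s := Ioc a) (a := a)
    (fun _ _ ↦ measurableSet_Ioc.nullMeasurableSet)
    (fun _ _ _ hxy ↦ Ioc_subset_Ioc_right hxy) ⟨b, hab, hμ⟩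
  rwa [inter_empty, measure_empty] at h

section RealLine

variable {μ : Measure ℝ} {a b ε : ℝ}

lemma volume_real_Ico_sub_inter_Ico {s : ℝ} (hs : s ∈ Ioc a b) (hε : 0 ≤ ε) :
    volume.real (Ico (s - ε) s ∩ Ico a b) = min (s - a) ε := by
  rw [Ico_inter_Ico, min_eq_left hs.2,
    Real.volume_real_Ico_of_le (max_le (sub_le_self s hε) hs.1.le), ← min_sub_sub_left,
    sub_sub_cancel, min_comm]

lemma intervalIntegral_measureReal_Ioc_min (hμ : μ (Ioc a b) ≠ ⊤) (hab : a ≤ b) (hε : 0 ≤ ε) :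
    ∫ u in a..b, μ.real (Ioc u (min (u + ε) b)) = ∫ s in Ioc a b, min (s - a) ε ∂μ := by
  have : IsFiniteMeasure (μ.restrict (Ioc a b)) := isFiniteMeasure_restrict.2 hμ
  let band : Set (ℝ × ℝ) := {p | p.1 < p.2 ∧ p.2 ≤ p.1 + ε}
  have hband : MeasurableSet band :=
    (measurableSet_lt measurable_fst measurable_snd).inter
      (measurableSet_le measurable_snd (measurable_fst.add_const ε))
  have slice_left (u : ℝ) (hu : u ∈ Ico a b) :
      (μ.restrict (Ioc a b)).real {s | (u, s) ∈ band} = μ.real (Ioc u (min (u + ε) b)) := by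
    rw [show {s | (u, s) ∈ band} = Ioc u (u + ε) from rfl,
      measureReal_restrict_apply measurableSet_Ioc, Ioc_inter_Ioc, max_eq_left hu.1]
  have slice_right (s : ℝ) (hs : s ∈ Ioc a b) :
      (volume.restrict (Ico a b)).real {u | (u, s) ∈ band} = min (s - a) ε := by
    have slice_eq : {u | (u, s) ∈ band} = Ico (s - ε) s := by
      ext u
      simp only [band, mem_ofPred_eq, mem_Ico, sub_le_iff_le_add, and_comm]
    rw [slice_eq, measureReal_restrict_apply measurableSet_Ico,
      volume_real_Ico_sub_inter_Ico hs hε]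
  calc ∫ u in a..b, μ.real (Ioc u (min (u + ε) b))
      = ∫ u in Ico a b, (μ.restrict (Ioc a b)).real {s | (u, s) ∈ band} := by
        rw [intervalIntegral.integral_of_le hab, ← integral_Ico_eq_integral_Ioc,
          setIntegral_congr_fun measurableSet_Ico slice_left]
    _ = ∫ s in Ioc a b, (volume.restrict (Ico a b)).real {u | (u, s) ∈ band} ∂μ :=
        integral_measureReal_prodMk_comm _ _ hband
    _ = ∫ s in Ioc a b, min (s - a) ε ∂μ := setIntegral_congr_fun measurableSet_Ioc slice_right

lemma abs_min_div_sub_one_le_indicator {s : ℝ} (hs : a < s) (hε : 0 < ε) :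
    |min (s - a) ε / ε - 1| ≤ (Ioc a (a + ε)).indicator 1 s := by
  rcases le_or_gt s (a + ε) with hsε | hsε
  · have ratio_nonneg : 0 ≤ min (s - a) ε / ε :=
      div_nonneg (le_min (sub_pos.2 hs).le hε.le) hε.le
    have ratio_le_one : min (s - a) ε / ε ≤ 1 := (div_le_one hε).2 (min_le_right _ _)
    rw [indicator_of_mem (show s ∈ Ioc a (a + ε) from ⟨hs, hsε⟩), Pi.one_apply, abs_le]
    constructor <;> linarith
  · rw [indicator_of_notMem fun h ↦ hsε.not_ge h.2, min_eq_right (by linarith),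
      div_self hε.ne', sub_self, abs_zero]

lemma abs_setIntegral_min_div_sub_measureReal_le (hμ : μ (Ioc a b) ≠ ⊤) (hε : 0 < ε) :
    |∫ s in Ioc a b, min (s - a) ε / ε ∂μ - μ.real (Ioc a b)| ≤
      μ.real (Ioc a (min (a + ε) b)) := by
  have : IsFiniteMeasure (μ.restrict (Ioc a b)) := isFiniteMeasure_restrict.2 hμ
  have hindicator : Integrable ((Ioc a (a + ε)).indicator (1 : ℝ → ℝ)) (μ.restrict (Ioc a b)) :=
    (integrable_const (1 : ℝ)).indicator measurableSet_Ioc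
  have hbound : ∀ᵐ s ∂μ.restrict (Ioc a b),
      ‖min (s - a) ε / ε - 1‖ ≤ (Ioc a (a + ε)).indicator 1 s :=
    ae_restrict_of_forall_mem measurableSet_Ioc fun s hs ↦
      abs_min_div_sub_one_le_indicator hs.1 hε
  have hdiff : Integrable (fun s ↦ min (s - a) ε / ε - 1) (μ.restrict (Ioc a b)) :=
    hindicator.mono' (by fun_prop) hbound
  have hratio : Integrable (fun s ↦ min (s - a) ε / ε) (μ.restrict (Ioc a b)) :=
    (hdiff.add (integrable_const 1)).congr (.of_forall fun _ ↦ sub_add_cancel _ _)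
  calc |∫ s in Ioc a b, min (s - a) ε / ε ∂μ - μ.real (Ioc a b)|
      = ‖∫ s in Ioc a b, (min (s - a) ε / ε - 1) ∂μ‖ := by
        rw [integral_sub hratio (integrable_const 1), setIntegral_const, smul_eq_mul, mul_one,
          Real.norm_eq_abs]
    _ ≤ ∫ s in Ioc a b, (Ioc a (a + ε)).indicator 1 s ∂μ :=
        norm_integral_le_of_norm_le hindicator hbound
    _ = μ.real (Ioc a (min (a + ε) b)) := by
        rw [integral_indicator_one measurableSet_Ioc,
          measureReal_restrict_apply measurableSet_Ioc, Ioc_inter_Ioc, max_self]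

end RealLine

/-- `μ` restricts on `(a, b]` to the Lebesgue–Stieltjes measure of the nondecreasing function
`F` on `[a, b]`. Monotonicity is part of the notion since `ENNReal.ofReal` would send negative
increments to `0`. -/
structure IsStieltjesMeasureOn (F : ℝ → ℝ) (a b : ℝ) (μ : Measure ℝ) : Prop where
  monotoneOn : MonotoneOn F (Icc a b)
  measure_Ioc : ∀ c d : ℝ, a ≤ c → c ≤ d → d ≤ b → μ (Ioc c d) = ENNReal.ofReal (F d - F c)

/-- The `ε`-regularization of the increment `F t - F a`: the increments of `F` over the windows
`[u, u + ε]`, cut off at `t`, are integrated over `u ∈ [a, t]` and divided by `ε`. -/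
noncomputable def regularizedIncrement (F : ℝ → ℝ) (ε a t : ℝ) : ℝ :=
  (1 / ε) * ∫ u in a..t, (F (min (u + ε) t) - F u)

namespace IsStieltjesMeasureOn

variable {F : ℝ → ℝ} {a b c d ε t : ℝ} {μ : Measure ℝ}

lemma measureReal_Ioc (h : IsStieltjesMeasureOn F a b μ) (hac : a ≤ c) (hcd : c ≤ d)
    (hdb : d ≤ b) : μ.real (Ioc c d) = F d - F c := by
  rw [measureReal_def, h.measure_Ioc c d hac hcd hdb, ENNReal.toReal_ofReal]
  exact sub_nonneg.2 (h.monotoneOn ⟨hac, hcd.trans hdb⟩ ⟨hac.trans hcd, hdb⟩ hcd)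

lemma measure_Ioc_ne_top (h : IsStieltjesMeasureOn F a b μ) (ht : t ∈ Icc a b) :
    μ (Ioc a t) ≠ ⊤ := by
  rw [h.measure_Ioc a t le_rfl ht.1 ht.2]
  exact ENNReal.ofReal_ne_top

lemma tendsto_nhdsGT (h : IsStieltjesMeasureOn F a b μ) (hab : a < b) :
    Tendsto F (𝓝[>] a) (𝓝 (F a)) := by
  have hreal : Tendsto (fun x ↦ μ.real (Ioc a x) + F a) (𝓝[>] a) (𝓝 (F a)) := by
    simpa [measureReal_def] using ((ENNReal.tendsto_toReal ENNReal.zero_ne_top).comp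
      (tendsto_measure_Ioc_nhdsGT hab (h.measure_Ioc_ne_top ⟨hab.le, le_rfl⟩))).add_const (F a)
  refine hreal.congr' ?_
  filter_upwards [Ioc_mem_nhdsGT hab] with x hx
  rw [h.measureReal_Ioc le_rfl hx.1.le hx.2, sub_add_cancel]

lemma regularizedIncrement_eq_setIntegral (h : IsStieltjesMeasureOn F a b μ) (hε : 0 < ε)
    (ht : t ∈ Icc a b) :
    regularizedIncrement F ε a t = ∫ s in Ioc a t, min (s - a) ε / ε ∂μ := by
  have increment_eq : EqOn (fun u ↦ F (min (u + ε) t) - F u)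
      (fun u ↦ μ.real (Ioc u (min (u + ε) t))) (uIcc a t) := by
    intro u hu
    rw [uIcc_of_le ht.1] at hu
    exact (h.measureReal_Ioc hu.1 (le_min (le_add_of_nonneg_right hε.le) hu.2)
      ((min_le_right _ _).trans ht.2)).symm
  rw [regularizedIncrement, intervalIntegral.integral_congr increment_eq,
    intervalIntegral_measureReal_Ioc_min (h.measure_Ioc_ne_top ht) ht.1 hε.le,
    integral_div, one_div_mul_eq_div]

lemma abs_regularizedIncrement_sub_le (h : IsStieltjesMeasureOn F a b μ) (hε : 0 < ε)
    (hεb : a + ε ≤ b) (ht : t ∈ Icc a b) :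
    |regularizedIncrement F ε a t - (F t - F a)| ≤ F (a + ε) - F a := by
  have haε : a ≤ a + ε := le_add_of_nonneg_right hε.le
  have hmin : a ≤ min (a + ε) t := le_min haε ht.1
  have hminb : min (a + ε) t ≤ b := (min_le_right _ _).trans ht.2
  calc |regularizedIncrement F ε a t - (F t - F a)|
      = |∫ s in Ioc a t, min (s - a) ε / ε ∂μ - μ.real (Ioc a t)| := by
        rw [h.regularizedIncrement_eq_setIntegral hε ht, h.measureReal_Ioc le_rfl ht.1 ht.2]
    _ ≤ μ.real (Ioc a (min (a + ε) t)) :=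
        abs_setIntegral_min_div_sub_measureReal_le (h.measure_Ioc_ne_top ht) hε
    _ = F (min (a + ε) t) - F a := h.measureReal_Ioc le_rfl hmin hminb
    _ ≤ F (a + ε) - F a :=
        sub_le_sub_right (h.monotoneOn ⟨hmin, hminb⟩ ⟨haε, hεb⟩ (min_le_left _ _)) _

lemma tendsto_iSup_abs_regularizedIncrement_sub (h : IsStieltjesMeasureOn F a b μ) (hab : a < b) :
    Tendsto (fun ε : ℝ ↦ ⨆ t : Icc a b, |regularizedIncrement F ε a t - (F t - F a)|)
      (𝓝[>] 0) (𝓝 0) := by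
  have hshift : Tendsto (fun ε ↦ a + ε) (𝓝[>] 0) (𝓝[>] a) := by
    rw [Tendsto, map_add_left_nhdsGT, add_zero]
  have hbound : Tendsto (fun ε ↦ F (a + ε) - F a) (𝓝[>] 0) (𝓝 0) := by
    simpa using ((h.tendsto_nhdsGT hab).comp hshift).sub_const (F a)
  have : Nonempty (Icc a b) := ⟨⟨a, le_rfl, hab.le⟩⟩
  refine squeeze_zero' (.of_forall fun ε ↦ Real.iSup_nonneg fun t ↦ abs_nonneg _) ?_ hbound
  filter_upwards [Ioc_mem_nhdsGT (sub_pos.2 hab)] with ε hε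
  exact ciSup_le fun t ↦ h.abs_regularizedIncrement_sub_le hε.1 (by linarith [hε.2]) t.2

end IsStieltjesMeasureOn

theorem statement6_general {a b : ℝ} (hab : a < b) {F : ℝ → ℝ} {μ : Measure ℝ}
    (h : IsStieltjesMeasureOn F a b μ) :
    Tendsto (fun ε : ℝ ↦ ⨆ t : Icc a b,
        |(1 / ε) * (∫ u in a..t, (F (min (u + ε) t) - F u)) - (F t - F a)|)
      (𝓝[>] 0) (𝓝 0) ∧
    ∀ ε : ℝ, 0 < ε → ∀ t ∈ Icc a b,
      (1 / ε) * (∫ u in a..t, (F (min (u + ε) t) - F u)) =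
        ∫ s in Ioc a t, min (s - a) ε / ε ∂μ :=
  ⟨h.tendsto_iSup_abs_regularizedIncrement_sub hab,
    fun _ hε _ ht ↦ h.regularizedIncrement_eq_setIntegral hε ht⟩

/-- For a continuous nondecreasing `F : [0,T] → ℝ` with `F(0) = 0` and
`μ_F` its Lebesgue–Stieltjes measure (characterized by `μ_F((a,b]) = F(b) − F(a)`),
`sup_{t ∈ [0,T]} |(1/ε) ∫_0^t (F((u+ε)∧t) − F(u)) du − F(t)|` tends to `0` as `ε → 0⁺`,
and for every `ε > 0` and `t ∈ [0,T]`,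
`(1/ε) ∫_0^t (F((u+ε)∧t) − F(u)) du = ∫_{(0,t]} (s∧ε)/ε dμ_F(s)`. -/
theorem statement6 (T : ℝ) (hT : 0 < T) (F : ℝ → ℝ)
    (hFc : ContinuousOn F (Icc 0 T)) (hFm : MonotoneOn F (Icc 0 T)) (hF0 : F 0 = 0)
    (μ : Measure ℝ)
    (hμ : ∀ a b : ℝ, 0 ≤ a → a ≤ b → b ≤ T →
      μ (Ioc a b) = ENNReal.ofReal (F b - F a)) :
    Tendsto (fun ε : ℝ =>
        ⨆ t : Icc (0:ℝ) T,
          |(1 / ε) * (∫ u in (0:ℝ)..t, (F (min (u + ε) t) - F u)) - F t|)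
      (nhdsWithin 0 (Ioi 0)) (nhds 0)
    ∧ ∀ ε : ℝ, 0 < ε → ∀ t ∈ Icc (0:ℝ) T,
      (1 / ε) * (∫ u in (0:ℝ)..t, (F (min (u + ε) t) - F u))
        = ∫ s in Ioc (0:ℝ) t, (min s ε) / ε ∂μ := by
  simpa only [hF0, sub_zero] using statement6_general hT ⟨hFm, hμ⟩
end

section
/- For t > 0, let f(t, y) = ∫_ℝ (x + y)⁺ dγ_t(x), where γ_t is the centered Gaussian measure on ℝ with variance t. Then for every t > 0, the function y ↦ f(t, y) is differentiable on ℝ with derivative ∂f/∂y (t, y) = Φ(y/√t), where Φ is the standard normal distribution function. -/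
open MeasureTheory Set

/-- The standard normal distribution function `Φ(z) = ∫_{−∞}^z e^{−x²/2}/√(2π) dx`. -/
noncomputable def stdNormalCDF (z : ℝ) : ℝ :=
  ∫ x in Iic z, Real.exp (-x ^ 2 / 2) / Real.sqrt (2 * Real.pi)

/-!
The positive part is 1-Lipschitz and differentiable off the origin, with derivative the indicator of
the half-line, so for integrable `X` with `ℙ(X = -y) = 0` dominated convergence gives
`d/dy 𝔼[(X + y)⁺] = ℙ(X ≥ -y)`. For a centered Gaussian `X` of variance `t` this probability
is `Φ(y / √t)`, by reflection and standardization.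
-/

section PositivePart

theorem hasDerivAt_max_zero {x : ℝ} (hx : x ≠ 0) :
    HasDerivAt (fun z : ℝ => max z 0) ((Ici 0).indicator 1 x) x := by
  rcases hx.lt_or_gt with hneg | hpos
  · rw [indicator_of_notMem (notMem_Ici.2 hneg)]
    refine (hasDerivAt_const x (0 : ℝ)).congr_of_eventuallyEq ?_
    filter_upwards [Iio_mem_nhds hneg] with z hz using max_eq_right (le_of_lt hz)
  · rw [indicator_of_mem (mem_Ici.2 hpos.le)]
    refine (hasDerivAt_id x).congr_of_eventuallyEq ?_
    filter_upwards [Ioi_mem_nhds hpos] with z hz using max_eq_left (le_of_lt hz)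

theorem lipschitzWith_max_const_add_zero (a : ℝ) :
    LipschitzWith 1 (fun z : ℝ => max (a + z) 0) :=
  (isometry_add_left a).lipschitz.max_const 0

variable {α : Type*} [MeasurableSpace α] {μ : Measure α} {X : α → ℝ}

theorem integral_indicator_Ici_add (hX : AEMeasurable X μ) (y : ℝ) :
    ∫ a, (Ici 0).indicator (1 : ℝ → ℝ) (X a + y) ∂μ = μ.real {a | -y ≤ X a} := by
  have indicator_eq : (fun a => (Ici 0).indicator (1 : ℝ → ℝ) (X a + y)) =
      {a | -y ≤ X a}.indicator fun _ => 1 := by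
    ext a
    simp only [indicator_apply, mem_Ici, mem_ofPred_eq, neg_le_iff_add_nonneg, Pi.one_apply]
  rw [indicator_eq, integral_indicator₀ (nullMeasurableSet_le aemeasurable_const hX)]
  simp

theorem hasDerivAt_integral_max_add_zero [IsFiniteMeasure μ] (hX : Integrable X μ) {y : ℝ}
    (hXy : ∀ᵐ a ∂μ, X a ≠ -y) :
    HasDerivAt (fun z => ∫ a, max (X a + z) 0 ∂μ) (μ.real {a | -y ≤ X a}) y := by
  have integrable_max (z : ℝ) : Integrable (fun a => max (X a + z) 0) μ :=
    (hX.add (integrable_const z)).pos_part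
  have aestronglyMeasurable_deriv :
      AEStronglyMeasurable (fun a => (Ici 0).indicator (1 : ℝ → ℝ) (X a + y)) μ :=
    ((measurable_one.indicator measurableSet_Ici).comp_aemeasurable
      (hX.aemeasurable.add_const y)).aestronglyMeasurable
  have lipschitz (a : α) :
      LipschitzOnWith (Real.nnabs 1) (fun z => max (X a + z) 0) univ := by
    simpa using lipschitzWith_max_const_add_zero (X a)
  have hasDerivAt_integrand : ∀ᵐ a ∂μ, HasDerivAt (fun z => max (X a + z) 0)
      ((Ici 0).indicator 1 (X a + y)) y := by
    filter_upwards [hXy] with a ha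
    exact (hasDerivAt_max_zero (mt eq_neg_of_add_eq_zero_left ha)).comp_const_add (X a) y
  rw [← integral_indicator_Ici_add hX.aemeasurable]
  exact (hasDerivAt_integral_of_dominated_loc_of_lip Filter.univ_mem
    (.of_forall fun z => (integrable_max z).aestronglyMeasurable) (integrable_max y)
    aestronglyMeasurable_deriv (.of_forall lipschitz) (integrable_const 1)
    hasDerivAt_integrand).2

end PositivePart

section GaussianTails

open ProbabilityTheory
open scoped NNReal

theorem measureReal_gaussianReal_zero_one_Iic (z : ℝ) :
    (gaussianReal 0 1).real (Iic z) = stdNormalCDF z := by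
  rw [measureReal_def, gaussianReal_apply_eq_integral 0 one_ne_zero,
    ENNReal.toReal_ofReal (integral_nonneg (gaussianPDFReal_nonneg 0 1)), stdNormalCDF]
  congr! 2 with x
  simp [gaussianPDFReal, div_eq_inv_mul]

variable (m : ℝ) {v : ℝ≥0}

theorem gaussianReal_map_sub_div_sqrt (hv : v ≠ 0) :
    (gaussianReal m v).map (fun x => (x - m) / √v) = gaussianReal 0 1 := by
  have variance_eq_one : v / .mk (√v ^ 2) (sq_nonneg _) = 1 := by
    ext
    simp [hv]
  have map_eq_comp := Measure.map_map (μ := gaussianReal m v) (g := (· / √(v : ℝ)))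
    (f := (· - m)) (by fun_prop) (by fun_prop)
  rw [gaussianReal_map_sub_const, gaussianReal_map_div_const, sub_self, zero_div,
    variance_eq_one] at map_eq_comp
  exact map_eq_comp.symm

theorem measureReal_gaussianReal_Iic (hv : v ≠ 0) (x : ℝ) :
    (gaussianReal m v).real (Iic x) = stdNormalCDF ((x - m) / √v) := by
  have sqrt_pos : 0 < √(v : ℝ) := Real.sqrt_pos.2 (NNReal.coe_pos.2 (pos_iff_ne_zero.2 hv))
  have preimage_Iic : (fun u => (u - m) / √v) ⁻¹' Iic ((x - m) / √v) = Iic x := by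
    ext u
    simp only [mem_preimage, mem_Iic, div_le_div_iff_of_pos_right sqrt_pos, sub_le_sub_iff_right]
  rw [← measureReal_gaussianReal_zero_one_Iic, ← gaussianReal_map_sub_div_sqrt m hv,
    map_measureReal_apply (by fun_prop) measurableSet_Iic, preimage_Iic]

theorem measureReal_gaussianReal_Ici (hv : v ≠ 0) (x : ℝ) :
    (gaussianReal m v).real (Ici x) = stdNormalCDF ((m - x) / √v) := by
  calc (gaussianReal m v).real (Ici x)
    _ = ((gaussianReal m v).map (fun u => -u)).real (Iic (-x)) := by
      rw [map_measureReal_apply measurable_neg measurableSet_Iic, neg_preimage, neg_Iic, neg_neg]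
    _ = stdNormalCDF ((m - x) / √v) := by
      rw [gaussianReal_map_neg, measureReal_gaussianReal_Iic _ hv, neg_sub_neg]

end GaussianTails

/-- Let `f(t,y) = ∫ (x+y)⁺ dγ_t(x)` for `γ_t` the centered Gaussian measure
of variance `t > 0`. Then `y ↦ f(t,y)` is differentiable with derivative `Φ(y/√t)`. -/
theorem statement10 (t : ℝ) (ht : 0 < t) (y : ℝ) :
    HasDerivAt
      (fun y' : ℝ =>
        ∫ x, max (x + y') 0 ∂(ProbabilityTheory.gaussianReal 0 (Real.toNNReal t)))
      (stdNormalCDF (y / Real.sqrt t)) y := by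
  have variance_ne_zero : t.toNNReal ≠ 0 := (Real.toNNReal_pos.2 ht).ne'
  have := ProbabilityTheory.nullSingletonClass_gaussianReal (μ := 0) variance_ne_zero
  have integrable_id : Integrable (fun x => x) (ProbabilityTheory.gaussianReal 0 t.toNNReal) :=
    (ProbabilityTheory.memLp_id_gaussianReal 1).integrable le_rfl
  have tail : (ProbabilityTheory.gaussianReal 0 t.toNNReal).real (Ici (-y)) =
      stdNormalCDF (y / √t) := by
    rw [measureReal_gaussianReal_Ici 0 variance_ne_zero, zero_sub, neg_neg,
      Real.coe_toNNReal t ht.le]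
  rw [← tail]
  exact hasDerivAt_integral_max_add_zero integrable_id (Measure.ae_ne _ (-y))
end

section
/- For t > 0, let f(t, y) = ∫_ℝ (x + y)⁺ dγ_t(x), where γ_t is the centered Gaussian measure on ℝ with variance t. Then for every t > 0 and y ∈ ℝ, the second partial derivative in y satisfies ∂²f/∂y² (t, y) = φ(y/√t)/√t and the partial derivative in t satisfies ∂f/∂t (t, y) = (1/2) · φ(y/√t)/√t, where φ(z) = e^{−z²/2}/√(2π) is the standard normal density; in particular f solves the heat equation ∂f/∂t = (1/2) ∂²f/∂y² on (0, ∞) × ℝ. -/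
open MeasureTheory Set

/-- The standard normal density `φ(z) = e^{−z²/2}/√(2π)`. -/
noncomputable def stdNormalPDF (z : ℝ) : ℝ :=
  Real.exp (-z ^ 2 / 2) / Real.sqrt (2 * Real.pi)

/-- `f(t,y) = ∫ (x+y)⁺ dγ_t(x)` for `γ_t` the centered Gaussian measure of variance `t`. -/
noncomputable def gaussPosPart (t y : ℝ) : ℝ :=
  ∫ x, max (x + y) 0 ∂(ProbabilityTheory.gaussianReal 0 (Real.toNNReal t))

/-!
For `X` normal with mean `m`, variance `v` and density `p`, the identity `v p'(x) = -(x - m) p(x)`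
evaluates the partial expectation and gives `E (a - X)⁺ = (a - m) P(X ≤ a) + v p(a)`, whose
derivative in `a` collapses to the distribution function `P(X ≤ a)`, with derivative `p(a)`.
By symmetry of `γ_t` this yields `∂²f/∂y²`. For `∂f/∂t`, the Gaussian scaling
`f(t, y) = √t f(1, y/√t)` reduces everything to `f(1, a) - a ∂f/∂a(1, a) = φ(a)`.
-/

open ProbabilityTheory
open scoped NNReal

theorem hasDerivAt_integral_Iic {E : Type*} [NormedAddCommGroup E] [NormedSpace ℝ E]
    [CompleteSpace E] {f : ℝ → E} {a : ℝ} (hf : Integrable f) (hfa : ContinuousAt f a) :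
    HasDerivAt (fun b ↦ ∫ x in Iic b, f x) (f a) a := by
  have split (b : ℝ) : ∫ x in Iic b, f x = (∫ x in Iic a, f x) + ∫ x in a..b, f x := by
    rw [← intervalIntegral.integral_Iic_sub_Iic hf.integrableOn hf.integrableOn,
      add_sub_cancel]
  rw [funext split]
  exact (intervalIntegral.integral_hasDerivAt_right hf.intervalIntegrable
    hf.aestronglyMeasurable.stronglyMeasurableAtFilter hfa).const_add _

theorem integral_max_sub_zero_eq_setIntegral_Iic (μ : Measure ℝ) (a : ℝ) :
    ∫ x, max (a - x) 0 ∂μ = ∫ x in Iic a, (a - x) ∂μ := by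
  rw [← integral_indicator measurableSet_Iic]
  congr 1 with x
  rcases le_or_gt x a with hx | hx
  · rw [indicator_of_mem (mem_Iic.2 hx), max_eq_left (sub_nonneg.2 hx)]
  · rw [indicator_of_notMem (notMem_Iic.2 hx), max_eq_right (sub_nonpos.2 hx.le)]

section Gaussian

variable {m : ℝ} {v : ℝ≥0}

theorem hasDerivAt_gaussianPDFReal (m : ℝ) (v : ℝ≥0) (x : ℝ) :
    HasDerivAt (gaussianPDFReal m v) (-((x - m) / v) * gaussianPDFReal m v x) x := by
  have exponent : HasDerivAt (fun z : ℝ ↦ -(z - m) ^ 2 / (2 * v)) (-((x - m) / v)) x := by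
    convert! (((hasDerivAt_id x).sub_const m).pow 2).neg.div_const (2 * (v : ℝ)) using 1
    simp only [id_eq]
    field
  rw [gaussianPDFReal_def]
  convert! exponent.exp.const_mul _ using 1
  ring

theorem integrable_gaussianReal_iff_integrable_smul {E : Type*} [NormedAddCommGroup E]
    [NormedSpace ℝ E] {f : ℝ → E} (hv : v ≠ 0) :
    Integrable f (gaussianReal m v) ↔ Integrable (fun x ↦ gaussianPDFReal m v x • f x) := by
  simp only [gaussianReal_of_var_ne_zero m hv,
    integrable_withDensity_iff_integrable_smul' (measurable_gaussianPDF m v)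
      (.of_forall fun _ ↦ gaussianPDF_lt_top), toReal_gaussianPDF]

theorem setIntegral_gaussianReal_eq_setIntegral_smul {E : Type*} [NormedAddCommGroup E]
    [NormedSpace ℝ E] {f : ℝ → E} {s : Set ℝ} (hv : v ≠ 0) (hs : MeasurableSet s) :
    ∫ x in s, f x ∂gaussianReal m v = ∫ x in s, gaussianPDFReal m v x • f x := by
  simp only [gaussianReal_of_var_ne_zero m hv,
    setIntegral_withDensity_eq_setIntegral_toReal_smul (measurable_gaussianPDF m v)
      (.of_forall fun _ ↦ gaussianPDF_lt_top) _ hs, toReal_gaussianPDF]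

theorem integrable_sub_gaussianReal (c m : ℝ) (v : ℝ≥0) :
    Integrable (fun x ↦ x - c) (gaussianReal m v) :=
  (memLp_one_iff_integrable.1 (memLp_id_gaussianReal 1)).sub (integrable_const c)

theorem setIntegral_Iic_sub_gaussianReal (m : ℝ) (v : ℝ≥0) (a : ℝ) :
    ∫ x in Iic a, (x - m) ∂gaussianReal m v = -(v * gaussianPDFReal m v a) := by
  rcases eq_or_ne v 0 with rfl | hv
  · simp [setIntegral_dirac]
  have antideriv (x : ℝ) : HasDerivAt (fun z ↦ -(v * gaussianPDFReal m v z))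
      (gaussianPDFReal m v x • (x - m)) x := by
    convert! ((hasDerivAt_gaussianPDFReal m v x).const_mul (v : ℝ)).neg using 1
    rw [smul_eq_mul]
    field [NNReal.coe_ne_zero.2 hv]
  have integrable_deriv : Integrable (fun x ↦ gaussianPDFReal m v x • (x - m)) :=
    (integrable_gaussianReal_iff_integrable_smul hv).1 (integrable_sub_gaussianReal m m v)
  have integrable_antideriv : Integrable (fun x ↦ -(v * gaussianPDFReal m v x)) :=
    ((integrable_gaussianPDFReal m v).const_mul (v : ℝ)).neg
  rw [setIntegral_gaussianReal_eq_setIntegral_smul hv measurableSet_Iic,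
    integral_Iic_of_hasDerivAt_of_tendsto' (fun x _ ↦ antideriv x) integrable_deriv.integrableOn
      (tendsto_zero_of_hasDerivAt_of_integrableOn_Iic (fun x _ ↦ antideriv x)
        integrable_deriv.integrableOn (integrable_antideriv.integrableOn (s := Iic a))),
    sub_zero]

theorem cdf_gaussianReal_eq_setIntegral (hv : v ≠ 0) (m a : ℝ) :
    cdf (gaussianReal m v) a = ∫ x in Iic a, gaussianPDFReal m v x := by
  rw [cdf_eq_real, Measure.real, gaussianReal_apply_eq_integral m hv,
    ENNReal.toReal_ofReal (integral_nonneg (gaussianPDFReal_nonneg m v))]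

theorem hasDerivAt_cdf_gaussianReal (hv : v ≠ 0) (m a : ℝ) :
    HasDerivAt (cdf (gaussianReal m v)) (gaussianPDFReal m v a) a := by
  rw [funext (cdf_gaussianReal_eq_setIntegral hv m)]
  exact hasDerivAt_integral_Iic (integrable_gaussianPDFReal m v)
    (hasDerivAt_gaussianPDFReal m v a).continuousAt

theorem integral_max_sub_zero_gaussianReal (m : ℝ) (v : ℝ≥0) (a : ℝ) :
    ∫ x, max (a - x) 0 ∂gaussianReal m v =
      (a - m) * cdf (gaussianReal m v) a + v * gaussianPDFReal m v a := by
  calc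
    ∫ x, max (a - x) 0 ∂gaussianReal m v = ∫ x in Iic a, ((a - m) - (x - m)) ∂gaussianReal m v := by
      simp only [integral_max_sub_zero_eq_setIntegral_Iic, sub_sub_sub_cancel_right]
    _ = (a - m) * cdf (gaussianReal m v) a - ∫ x in Iic a, (x - m) ∂gaussianReal m v := by
      rw [integral_sub (integrable_const _) (integrable_sub_gaussianReal m m v).integrableOn,
        setIntegral_const, cdf_eq_real, smul_eq_mul, mul_comm]
    _ = (a - m) * cdf (gaussianReal m v) a + v * gaussianPDFReal m v a := by
      rw [setIntegral_Iic_sub_gaussianReal, sub_neg_eq_add]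

theorem hasDerivAt_integral_max_sub_zero_gaussianReal (hv : v ≠ 0) (m a : ℝ) :
    HasDerivAt (fun b ↦ ∫ x, max (b - x) 0 ∂gaussianReal m v) (cdf (gaussianReal m v) a) a := by
  simp only [integral_max_sub_zero_gaussianReal]
  convert! (((hasDerivAt_id a).sub_const m).mul (hasDerivAt_cdf_gaussianReal hv m a)).add
    ((hasDerivAt_gaussianPDFReal m v a).const_mul (v : ℝ)) using 1
  simp only [id_eq]
  field [NNReal.coe_ne_zero.2 hv]

theorem gaussianPDFReal_eq_stdNormalPDF_div_sqrt (m : ℝ) (v : ℝ≥0) (x : ℝ) :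
    gaussianPDFReal m v x = stdNormalPDF ((x - m) / √v) / √v := by
  rw [gaussianPDFReal, stdNormalPDF, Real.sqrt_mul (by positivity), div_pow,
    Real.sq_sqrt v.coe_nonneg]
  ring_nf

end Gaussian

section gaussPosPart

variable {t : ℝ}

theorem gaussPosPart_eq_integral_max_sub_zero (t y : ℝ) :
    gaussPosPart t y = ∫ x, max (y - x) 0 ∂gaussianReal 0 t.toNNReal := by
  have symmetric := gaussianReal_map_neg (μ := 0) (v := t.toNNReal)
  rw [neg_zero] at symmetric
  rw [gaussPosPart, ← symmetric, integral_map (by fun_prop) (by fun_prop), symmetric]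
  simp only [neg_add_eq_sub]

theorem hasDerivAt_gaussPosPart_right (ht : 0 < t) (y : ℝ) :
    HasDerivAt (gaussPosPart t) (cdf (gaussianReal 0 t.toNNReal) y) y := by
  rw [funext (gaussPosPart_eq_integral_max_sub_zero t)]
  exact hasDerivAt_integral_max_sub_zero_gaussianReal (Real.toNNReal_pos.2 ht).ne' 0 y

theorem hasDerivAt_deriv_gaussPosPart_right (ht : 0 < t) (y : ℝ) :
    HasDerivAt (deriv (gaussPosPart t)) (stdNormalPDF (y / √t) / √t) y := by
  have density : gaussianPDFReal 0 t.toNNReal y = stdNormalPDF (y / √t) / √t := by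
    rw [gaussianPDFReal_eq_stdNormalPDF_div_sqrt, sub_zero, Real.coe_toNNReal t ht.le]
  rw [funext fun z ↦ (hasDerivAt_gaussPosPart_right ht z).deriv, ← density]
  exact hasDerivAt_cdf_gaussianReal (Real.toNNReal_pos.2 ht).ne' 0 y

theorem gaussPosPart_sq_mul {c : ℝ} (hc : 0 ≤ c) (t y : ℝ) :
    gaussPosPart (c ^ 2 * t) (c * y) = c * gaussPosPart t y := by
  have scaling : (gaussianReal 0 t.toNNReal).map (c * ·) = gaussianReal 0 (c ^ 2 * t).toNNReal := by
    rw [gaussianReal_map_const_mul, mul_zero, Real.toNNReal_mul (sq_nonneg c),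
      Real.toNNReal_of_nonneg (sq_nonneg c)]
  rw [gaussPosPart, ← scaling, integral_map (by fun_prop) (by fun_prop), gaussPosPart,
    ← integral_const_mul]
  simp only [mul_max_of_nonneg _ _ hc, mul_add, mul_zero]

theorem gaussPosPart_eq_sqrt_mul (ht : 0 < t) (y : ℝ) :
    gaussPosPart t y = √t * gaussPosPart 1 (y / √t) := by
  rw [← gaussPosPart_sq_mul (Real.sqrt_nonneg t), Real.sq_sqrt ht.le, mul_one,
    mul_div_cancel₀ y (Real.sqrt_pos.2 ht).ne']

theorem gaussPosPart_one (a : ℝ) :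
    gaussPosPart 1 a = a * cdf (gaussianReal 0 1) a + stdNormalPDF a := by
  rw [gaussPosPart_eq_integral_max_sub_zero, integral_max_sub_zero_gaussianReal,
    gaussianPDFReal_eq_stdNormalPDF_div_sqrt]
  simp

theorem hasDerivAt_gaussPosPart_left (ht : 0 < t) (y : ℝ) :
    HasDerivAt (fun s ↦ gaussPosPart s y) (1 / 2 * (stdNormalPDF (y / √t) / √t)) t := by
  have sqrt_pos : 0 < √t := Real.sqrt_pos.2 ht
  have deriv_sqrt := Real.hasDerivAt_sqrt ht.ne'
  have deriv_div_sqrt := (hasDerivAt_const t y).div deriv_sqrt sqrt_pos.ne'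
  have deriv_one : HasDerivAt (gaussPosPart 1) (cdf (gaussianReal 0 1) (y / √t)) (y / √t) := by
    simpa only [Real.toNNReal_one] using hasDerivAt_gaussPosPart_right one_pos (y / √t)
  have self_similar : (fun s ↦ gaussPosPart s y) =ᶠ[nhds t]
      fun s ↦ √s * gaussPosPart 1 (y / √s) := by
    filter_upwards [lt_mem_nhds ht] with s hs using gaussPosPart_eq_sqrt_mul hs y
  refine HasDerivAt.congr_of_eventuallyEq ?_ self_similar
  convert! deriv_sqrt.mul (deriv_one.comp t deriv_div_sqrt) using 1
  simp only [Function.comp_apply, Pi.div_apply, gaussPosPart_one]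
  field

end gaussPosPart

/-- For `t > 0` and `y ∈ ℝ`, the function `f(t,y) = ∫ (x+y)⁺ dγ_t(x)`
satisfies `∂²f/∂y²(t,y) = φ(y/√t)/√t` and `∂f/∂t(t,y) = (1/2) φ(y/√t)/√t`; in particular
`f` solves the heat equation `∂f/∂t = (1/2) ∂²f/∂y²` on `(0,∞) × ℝ`. -/
theorem statement11 (t : ℝ) (ht : 0 < t) (y : ℝ) :
    HasDerivAt (fun y' : ℝ => deriv (fun z => gaussPosPart t z) y')
      (stdNormalPDF (y / Real.sqrt t) / Real.sqrt t) y ∧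
    HasDerivAt (fun t' : ℝ => gaussPosPart t' y)
      ((1 / 2) * (stdNormalPDF (y / Real.sqrt t) / Real.sqrt t)) t ∧
    deriv (fun t' : ℝ => gaussPosPart t' y) t
      = (1 / 2) * deriv (deriv (fun z => gaussPosPart t z)) y := by
  have space := hasDerivAt_deriv_gaussPosPart_right ht y
  have time := hasDerivAt_gaussPosPart_left ht y
  exact ⟨space, time, by rw [time.deriv, space.deriv]⟩
end

section
/- Let (B_t)_{t ≥ 0} be a standard Brownian motion and let 0 < s < s' < u. Then E[(1_{B_s > 0} − 1_{B_u > 0})(1_{B_{s'} > 0} − 1_{B_u > 0})] = (1/(2π)) · (arctan(√((u − s')/s')) + arctan(√((u − s)/s)) − arctan(√((s' − s)/s))). -/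
open MeasureTheory Set

/-- A standard Brownian motion: a real-valued process with continuous paths, starting at `0`,
with independent increments, the increment `B_t − B_s` (for `0 ≤ s ≤ t`) being a centered
Gaussian of variance `t − s`. -/
structure IsStandardBrownianMotion {Ω : Type*} [MeasurableSpace Ω] (P : Measure Ω)
    (B : ℝ → Ω → ℝ) : Prop where
  isProbabilityMeasure : IsProbabilityMeasure P
  continuous_paths : ∀ ω, ContinuousOn (fun t => B t ω) (Ici 0)
  start_at_zero : ∀ ω, B 0 ω = 0
  measurable : ∀ t, Measurable (B t)
  indep_increments : ∀ (n : ℕ) (t : ℕ → ℝ), Monotone t → (∀ i, 0 ≤ t i) →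
    ProbabilityTheory.iIndepFun
      (fun i : Fin n => fun ω => B (t (i + 1)) ω - B (t i) ω) P
  increment_law : ∀ s t : ℝ, 0 ≤ s → s ≤ t →
    P.map (fun ω => B t ω - B s ω) = ProbabilityTheory.gaussianReal 0 (Real.toNNReal (t - s))

/-!
Expanding the product leaves the probabilities that `B` is positive at one time, which is `1 / 2`
by symmetry, and at two times `s < t`. In the plane of the independent Gaussian variables `B s` and
`B t - B s`, scaled to a common variance, the latter event is a sector. The joint law is then
rotation invariant, so the probability of the sector is its opening angle divided by `2 * π`.
-/

open ProbabilityTheory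
open scoped Real NNReal

theorem gaussianPDFReal_zero_mul_gaussianPDFReal_zero (v : ℝ≥0) (x y : ℝ) :
    gaussianPDFReal 0 v x * gaussianPDFReal 0 v y =
      (2 * π * v)⁻¹ * Real.exp (-(x ^ 2 + y ^ 2) / (2 * v)) := by
  have normalization : (√(2 * π * v))⁻¹ * (√(2 * π * v))⁻¹ = (2 * π * v)⁻¹ := by
    rw [← mul_inv, Real.mul_self_sqrt (by positivity)]
  rw [gaussianPDFReal, gaussianPDFReal, mul_mul_mul_comm, normalization, ← Real.exp_add]
  ring_nf

theorem integral_gaussianReal_prod_eq_polarCoord {E : Type*} [NormedAddCommGroup E]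
    [NormedSpace ℝ E] {v : ℝ≥0} (hv : v ≠ 0) (f : ℝ × ℝ → E) :
    ∫ p, f p ∂(gaussianReal 0 v).prod (gaussianReal 0 v) =
      ∫ p in polarCoord.target,
        ((2 * π * v)⁻¹ * (p.1 * Real.exp (-p.1 ^ 2 / (2 * v)))) • f (polarCoord.symm p) := by
  have hpdf := measurable_gaussianPDF 0 v
  rw [gaussianReal_of_var_ne_zero 0 hv, prod_withDensity hpdf hpdf,
    integral_withDensity_eq_integral_toReal_smul (by fun_prop)
      (.of_forall fun _ ↦ ENNReal.mul_lt_top gaussianPDF_lt_top gaussianPDF_lt_top),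
    ← Measure.volume_eq_prod, ← integral_comp_polarCoord_symm]
  refine integral_congr_ae (.of_forall fun p ↦ ?_)
  have norm_sq : (p.1 * Real.cos p.2) ^ 2 + (p.1 * Real.sin p.2) ^ 2 = p.1 ^ 2 := by
    linear_combination p.1 ^ 2 * Real.sin_sq_add_cos_sq p.2
  simp only [polarCoord_symm_apply, ENNReal.toReal_mul, toReal_gaussianPDF,
    gaussianPDFReal_zero_mul_gaussianPDFReal_zero, norm_sq, smul_smul]
  congr 1
  ring

theorem integral_Ioi_mul_exp_neg_sq_div {v : ℝ} (hv : 0 < v) :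
    ∫ r in Ioi (0 : ℝ), r * Real.exp (-r ^ 2 / (2 * v)) = v := by
  have h := integral_rpow_mul_exp_neg_mul_rpow (p := 2) (q := 1) (b := (2 * v)⁻¹)
    two_pos (by norm_num) (by positivity)
  simp only [Real.rpow_one, Real.rpow_two] at h
  calc ∫ r in Ioi (0 : ℝ), r * Real.exp (-r ^ 2 / (2 * v))
    _ = ∫ r in Ioi (0 : ℝ), r * Real.exp (-(2 * v)⁻¹ * r ^ 2) := by
      simp only [div_eq_inv_mul, neg_mul, mul_neg]
    _ = v := by
      rw [h, one_add_one_eq_two, neg_div, div_self two_ne_zero, Real.rpow_neg_one, inv_inv,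
        Real.Gamma_one]
      ring

theorem measureReal_gaussianReal_prod_sector {v : ℝ≥0} (hv : v ≠ 0) {S : Set (ℝ × ℝ)} {T : Set ℝ}
    (hS : MeasurableSet S) (hT : MeasurableSet T)
    (hST : ∀ p ∈ polarCoord.target, polarCoord.symm p ∈ S ↔ p.2 ∈ T) :
    ((gaussianReal 0 v).prod (gaussianReal 0 v)).real S =
      volume.real (Ioo (-π) π ∩ T) / (2 * π) := by
  have hv_pos : (0 : ℝ) < v := by positivity
  have separated : ∀ p ∈ polarCoord.target,
      ((2 * π * v)⁻¹ * (p.1 * Real.exp (-p.1 ^ 2 / (2 * v)))) •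
          S.indicator (1 : ℝ × ℝ → ℝ) (polarCoord.symm p) =
        (p.1 * Real.exp (-p.1 ^ 2 / (2 * v))) * T.indicator (fun _ ↦ (2 * π * v)⁻¹) p.2 := by
    intro p hp
    by_cases hpT : p.2 ∈ T
    · rw [indicator_of_mem hpT, indicator_of_mem ((hST p hp).2 hpT), Pi.one_apply, smul_eq_mul]
      ring
    · rw [indicator_of_notMem hpT, indicator_of_notMem (mt (hST p hp).1 hpT), smul_zero, mul_zero]
  rw [← integral_indicator_one hS, integral_gaussianReal_prod_eq_polarCoord hv,
    setIntegral_congr_fun polarCoord.open_target.measurableSet separated, polarCoord_target,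
    Measure.volume_eq_prod,
    setIntegral_prod_mul (fun r : ℝ ↦ r * Real.exp (-r ^ 2 / (2 * v))),
    integral_Ioi_mul_exp_neg_sq_div hv_pos, setIntegral_indicator hT, setIntegral_const,
    smul_eq_mul]
  field_simp

theorem cos_pos_iff_abs_lt_pi_div_two {θ : ℝ} (hθ : |θ| ≤ π) : 0 < Real.cos θ ↔ |θ| < π / 2 := by
  rw [← Real.cos_abs, ← Real.cos_pi_div_two]
  exact Real.strictAntiOn_cos.lt_iff_gt ⟨by positivity, by linarith [Real.pi_pos]⟩
    ⟨abs_nonneg θ, hθ⟩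

theorem cos_pos_and_mul_cos_lt_sin_iff {θ : ℝ} (hθ : |θ| ≤ π) (c : ℝ) :
    0 < Real.cos θ ∧ c * Real.cos θ < Real.sin θ ↔ θ ∈ Ioo (Real.arctan c) (π / 2) := by
  have arctan_lt_iff (hθ' : θ ∈ Ioo (-(π / 2)) (π / 2)) :
      Real.arctan c < θ ↔ c * Real.cos θ < Real.sin θ := by
    conv_lhs => rw [← Real.arctan_tan hθ'.1 hθ'.2]
    rw [Real.arctan_lt_arctan_iff, Real.tan_eq_sin_div_cos,
      lt_div_iff₀ (Real.cos_pos_of_mem_Ioo hθ')]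
  rw [cos_pos_iff_abs_lt_pi_div_two hθ, abs_lt]
  constructor
  · rintro ⟨hθ', hlt⟩
    exact ⟨(arctan_lt_iff hθ').2 hlt, hθ'.2⟩
  · rintro ⟨hlt, hlt'⟩
    have hθ' := (⟨(Real.neg_pi_div_two_lt_arctan c).trans hlt, hlt'⟩ : θ ∈ Ioo (-(π / 2)) (π / 2))
    exact ⟨hθ', (arctan_lt_iff hθ').1 hlt⟩

theorem measureReal_gaussianReal_prod_fst_pos_and_mul_fst_lt_snd {v : ℝ≥0} (hv : v ≠ 0) (c : ℝ) :
    ((gaussianReal 0 v).prod (gaussianReal 0 v)).real {p | 0 < p.1 ∧ c * p.1 < p.2} =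
      1 / 4 - Real.arctan c / (2 * π) := by
  have hS : MeasurableSet {p : ℝ × ℝ | 0 < p.1 ∧ c * p.1 < p.2} := by measurability
  have sector : ∀ p ∈ polarCoord.target,
      polarCoord.symm p ∈ {p : ℝ × ℝ | 0 < p.1 ∧ c * p.1 < p.2} ↔
        p.2 ∈ Ioo (Real.arctan c) (π / 2) := by
    rintro ⟨r, θ⟩ ⟨hr, hθ⟩
    rw [← cos_pos_and_mul_cos_lt_sin_iff (abs_le.2 ⟨hθ.1.le, hθ.2.le⟩)]
    simp only [polarCoord_symm_apply, mem_ofPred_eq, mul_left_comm c r,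
      mul_pos_iff_of_pos_left (mem_Ioi.1 hr), mul_lt_mul_iff_right₀ (mem_Ioi.1 hr)]
  have arctan_mem := Real.arctan_mem_Ioo c
  have angles : Ioo (Real.arctan c) (π / 2) ⊆ Ioo (-π) π :=
    Ioo_subset_Ioo (by linarith [arctan_mem.1, Real.pi_pos]) (by linarith [Real.pi_pos])
  rw [measureReal_gaussianReal_prod_sector hv hS measurableSet_Ioo sector,
    inter_eq_self_of_subset_right angles, Real.volume_real_Ioo_of_le arctan_mem.2.le]
  field_simp
  ring

theorem measureReal_Ioi_zero_of_isNegInvariant {G : Type*} [AddCommGroup G] [LinearOrder G]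
    [IsOrderedAddMonoid G] [TopologicalSpace G] [OrderClosedTopology G] [MeasurableSpace G]
    [OpensMeasurableSpace G] [MeasurableNeg G] (μ : Measure G) [IsProbabilityMeasure μ]
    [μ.IsNegInvariant] [NullSingletonClass μ] :
    μ.real (Ioi 0) = 1 / 2 := by
  have reflection : μ.real (Iic 0) = μ.real (Ioi 0) := by
    rw [← measureReal_congr Iio_ae_eq_Iic, measureReal_def, measureReal_def, ← μ.measure_neg]
    simp
  have total := probReal_compl_eq_one_sub (μ := μ) (s := Ioi 0) measurableSet_Ioi
  rw [compl_Ioi, reflection] at total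
  linarith

instance isNegInvariant_gaussianReal_zero (v : ℝ≥0) : (gaussianReal 0 v).IsNegInvariant :=
  ⟨gaussianReal_map_neg.trans (by rw [neg_zero])⟩

section Probability

variable {Ω : Type*} [MeasurableSpace Ω] {P : Measure Ω}

theorem measureReal_pos_of_hasLaw_gaussianReal_zero {X : Ω → ℝ} {v : ℝ≥0} (hv : v ≠ 0)
    (hX : HasLaw X (gaussianReal 0 v) P) : P.real {ω | 0 < X ω} = 1 / 2 := by
  have := nullSingletonClass_gaussianReal (μ := 0) hv
  rw [hX.measureReal_eq (p := (0 < ·)) measurableSet_Ioi]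
  exact measureReal_Ioi_zero_of_isNegInvariant _

theorem measureReal_pos_and_add_pos_of_indepFun {X Y : Ω → ℝ} {v w : ℝ≥0} (hv : v ≠ 0)
    (hw : w ≠ 0) (hX : HasLaw X (gaussianReal 0 v) P) (hY : HasLaw Y (gaussianReal 0 w) P)
    (hXY : X ⟂ᵢ[P] Y) :
    P.real {ω | 0 < X ω ∧ 0 < X ω + Y ω} = 1 / 2 - Real.arctan √(w / v) / (2 * π) := by
  have := hX.isProbabilityMeasure
  set c : ℝ := √(v / w)
  have hc : 0 < c := by positivity
  have hcY : HasLaw (fun ω ↦ c * Y ω) (gaussianReal 0 v) P := by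
    convert gaussianReal_const_mul hY c using 2
    · simp
    · ext
      simp only [NNReal.coe_mul, NNReal.coe_mk, c]
      rw [Real.sq_sqrt (by positivity)]
      field_simp
  have pair_law : HasLaw (fun ω ↦ (X ω, c * Y ω))
      ((gaussianReal 0 v).prod (gaussianReal 0 v)) P := by
    have h := (indepFun_iff_map_prod_eq_prod_map_map hX.aemeasurable hcY.aemeasurable).1
      (hXY.comp measurable_id (measurable_const_mul c))
    exact ⟨by fun_prop, by rw [h, hX.map_eq, hcY.map_eq]⟩
  have add_pos_iff (x y : ℝ) : 0 < x + y ↔ -c * x < c * y := by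
    rw [← mul_pos_iff_of_pos_left hc]
    constructor <;> intro h <;> linarith
  have inv_c : √(w / v : ℝ) = c⁻¹ := by rw [← Real.sqrt_inv, inv_div]
  simp_rw [add_pos_iff]
  rw [pair_law.measureReal_eq (p := fun p : ℝ × ℝ ↦ 0 < p.1 ∧ -c * p.1 < p.2) (by measurability),
    measureReal_gaussianReal_prod_fst_pos_and_mul_fst_lt_snd hv, inv_c,
    Real.arctan_inv_of_pos hc, Real.arctan_neg]
  field_simp
  ring

theorem integral_indicator_sub_mul_indicator_sub [IsFiniteMeasure P] {A B C : Set Ω}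
    (hA : MeasurableSet A) (hB : MeasurableSet B) (hC : MeasurableSet C) :
    ∫ ω, (A.indicator 1 ω - C.indicator 1 ω) * (B.indicator 1 ω - C.indicator 1 ω) ∂P =
      P.real (A ∩ B) - P.real (A ∩ C) - P.real (B ∩ C) + P.real C := by
  have integrable_one {S : Set Ω} (hS : MeasurableSet S) :
      Integrable (S.indicator (1 : Ω → ℝ)) P := (integrable_const 1).indicator hS
  have expand : (fun ω ↦ (A.indicator 1 ω - C.indicator 1 ω) *
      (B.indicator 1 ω - C.indicator 1 ω)) =
        (A ∩ B).indicator (1 : Ω → ℝ) - (A ∩ C).indicator 1 - (B ∩ C).indicator 1 +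
          C.indicator 1 := by
    ext ω
    by_cases hωA : ω ∈ A <;> by_cases hωB : ω ∈ B <;> by_cases hωC : ω ∈ C <;>
      simp [hωA, hωB, hωC]
  have hAB := integrable_one (hA.inter hB)
  have hAC := integrable_one (hA.inter hC)
  have hBC := integrable_one (hB.inter hC)
  rw [expand, integral_add' ((hAB.sub hAC).sub hBC) (integrable_one hC),
    integral_sub' (hAB.sub hAC) hBC, integral_sub' hAB hAC, integral_indicator_one (hA.inter hB),
    integral_indicator_one (hA.inter hC), integral_indicator_one (hB.inter hC),
    integral_indicator_one hC]

end Probability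

namespace IsStandardBrownianMotion

variable {Ω : Type*} [MeasurableSpace Ω] {P : Measure Ω} {B : ℝ → Ω → ℝ} {s t : ℝ}

theorem hasLaw_sub (hB : IsStandardBrownianMotion P B) (hs : 0 ≤ s) (hst : s ≤ t) :
    HasLaw (fun ω ↦ B t ω - B s ω) (gaussianReal 0 (t - s).toNNReal) P :=
  ⟨((hB.measurable t).sub (hB.measurable s)).aemeasurable, hB.increment_law s t hs hst⟩

theorem hasLaw_eval (hB : IsStandardBrownianMotion P B) (ht : 0 ≤ t) :
    HasLaw (B t) (gaussianReal 0 t.toNNReal) P := by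
  simpa [hB.start_at_zero] using hB.hasLaw_sub le_rfl ht

theorem indepFun_eval_sub (hB : IsStandardBrownianMotion P B) (hs : 0 ≤ s) (hst : s ≤ t) :
    B s ⟂ᵢ[P] fun ω ↦ B t ω - B s ω := by
  let times : ℕ → ℝ
    | 0 => 0
    | 1 => s
    | _ + 2 => t
  have times_mono : Monotone times := monotone_nat_of_le_succ fun
    | 0 => hs
    | 1 => hst
    | _ + 2 => le_rfl
  have h := (hB.indep_increments 2 times times_mono fun i ↦ times_mono i.zero_le).indepFun
    (i := 0) (j := 1) (by decide)
  simpa [times, hB.start_at_zero] using h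

theorem measureReal_pos (hB : IsStandardBrownianMotion P B) (ht : 0 < t) :
    P.real {ω | 0 < B t ω} = 1 / 2 :=
  measureReal_pos_of_hasLaw_gaussianReal_zero (Real.toNNReal_pos.2 ht).ne' (hB.hasLaw_eval ht.le)

theorem measureReal_pos_inter_pos (hB : IsStandardBrownianMotion P B) (hs : 0 < s) (hst : s < t) :
    P.real ({ω | 0 < B s ω} ∩ {ω | 0 < B t ω}) =
      1 / 2 - Real.arctan √((t - s) / s) / (2 * π) := by
  have hst' := sub_pos.2 hst
  have h := measureReal_pos_and_add_pos_of_indepFun (Real.toNNReal_pos.2 hs).ne'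
    (Real.toNNReal_pos.2 hst').ne' (hB.hasLaw_eval hs.le) (hB.hasLaw_sub hs.le hst.le)
    (hB.indepFun_eval_sub hs.le hst.le)
  simpa [inter_def, hs.le, hst'.le] using h

theorem measurableSet_pos (hB : IsStandardBrownianMotion P B) (t : ℝ) :
    MeasurableSet {ω | 0 < B t ω} :=
  measurableSet_lt measurable_const (hB.measurable t)

end IsStandardBrownianMotion

/-- For a standard Brownian motion and `0 < s < s' < u`,
`E[(1_{B_s>0} − 1_{B_u>0})(1_{B_{s'}>0} − 1_{B_u>0})]
  = (1/(2π)) (arctan √((u−s')/s') + arctan √((u−s)/s) − arctan √((s'−s)/s))`. -/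
theorem statement13 {Ω : Type*} [MeasurableSpace Ω] (P : Measure Ω) (B : ℝ → Ω → ℝ)
    (hB : IsStandardBrownianMotion P B) (s s' u : ℝ)
    (hs : 0 < s) (hss' : s < s') (hs'u : s' < u) :
    (∫ ω, ((if 0 < B s ω then (1:ℝ) else 0) - (if 0 < B u ω then 1 else 0))
        * ((if 0 < B s' ω then (1:ℝ) else 0) - (if 0 < B u ω then 1 else 0)) ∂P)
      = (1 / (2 * Real.pi)) *
        (Real.arctan (Real.sqrt ((u - s') / s')) + Real.arctan (Real.sqrt ((u - s) / s))
          - Real.arctan (Real.sqrt ((s' - s) / s))) := by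
  have := hB.isProbabilityMeasure
  have expansion := integral_indicator_sub_mul_indicator_sub (P := P)
    (hB.measurableSet_pos s) (hB.measurableSet_pos s') (hB.measurableSet_pos u)
  simp only [indicator_apply, mem_ofPred_eq, Pi.one_apply] at expansion
  rw [expansion, hB.measureReal_pos_inter_pos hs hss',
    hB.measureReal_pos_inter_pos hs (hss'.trans hs'u),
    hB.measureReal_pos_inter_pos (hs.trans hss') hs'u,
    hB.measureReal_pos (hs.trans (hss'.trans hs'u))]
  ring
end

section
/- There exists a constant C > 0 such that for every T > 0 and every ε ∈ (0, 1], ∫_0^T ( ∫∫_{[(u−ε)⁺, u]²} (1/ε²) · 1_{s < s'} · ( arctan(√((u − s')/s')) + arctan(√((u − s)/s)) − arctan(√((s' − s)/s)) ) ds ds' ) du ≤ C √T √ε, where the inner double integral is taken over pairs (s, s') ∈ ((u−ε)⁺, u]² with 0 < s < s'. -/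
open MeasureTheory Set

/-!
By Jordan's inequality, `arctan √((u - s) / s)` is at most `π / 2 * √((u - s) / u)`, since
`(u - s) / u` is the squared sine of this angle. For `s, s'` within `ε` of `u` the bracket
therefore lies between `0` and `π * √(ε / u)`. The square of such pairs has area at most `ε ^ 2`,
which cancels the prefactor, and `√(ε / u)` integrates to `2 * √T * √ε` over `u ∈ [0, T]`.
-/

open scoped Real

theorem arctan_le_pi_div_two_mul_div_sqrt {x : ℝ} (hx : 0 ≤ x) :
    Real.arctan x ≤ π / 2 * (x / √(1 + x ^ 2)) := by
  have jordan : 2 / π * Real.arctan x ≤ Real.sin (Real.arctan x) :=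
    Real.mul_le_sin (Real.arctan_nonneg.2 hx) (Real.arctan_lt_pi_div_two x).le
  calc Real.arctan x = π / 2 * (2 / π * Real.arctan x) := by field_simp
    _ ≤ π / 2 * Real.sin (Real.arctan x) := by gcongr
    _ = π / 2 * (x / √(1 + x ^ 2)) := by rw [Real.sin_arctan]

theorem arctan_sqrt_sub_div_le {s u : ℝ} (hs : 0 < s) (hsu : s ≤ u) :
    Real.arctan √((u - s) / s) ≤ π / 2 * √((u - s) / u) := by
  have ratio_nonneg : 0 ≤ (u - s) / s := div_nonneg (sub_nonneg.2 hsu) hs.le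
  have one_add_ratio : 1 + (u - s) / s = u / s := by field_simp; ring
  calc Real.arctan √((u - s) / s)
      ≤ π / 2 * (√((u - s) / s) / √(1 + √((u - s) / s) ^ 2)) :=
        arctan_le_pi_div_two_mul_div_sqrt (Real.sqrt_nonneg _)
    _ = π / 2 * √((u - s) / u) := by
        rw [Real.sq_sqrt ratio_nonneg, ← Real.sqrt_div ratio_nonneg, one_add_ratio,
          div_div_div_cancel_right₀ hs.ne']

theorem norm_setIntegral_setIntegral_le_of_norm_le_const {X Y E : Type*} [MeasurableSpace X]
    [MeasurableSpace Y] [NormedAddCommGroup E] [NormedSpace ℝ E] {μ : Measure X} {ν : Measure Y}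
    {A : Set X} {B : Set Y} {f : X → Y → E} {K : ℝ} (hA : μ A < ⊤) (hB : ν B < ⊤)
    (hf : ∀ x ∈ A, ∀ y ∈ B, ‖f x y‖ ≤ K) :
    ‖∫ x in A, ∫ y in B, f x y ∂ν ∂μ‖ ≤ K * ν.real B * μ.real A :=
  norm_setIntegral_le_of_norm_le_const hA fun x hx =>
    norm_setIntegral_le_of_norm_le_const hB (hf x hx)

theorem inv_sqrt_eq_rpow (x : ℝ) : (√x)⁻¹ = x ^ (-(1 / 2) : ℝ) := by
  rcases le_or_gt 0 x with x_nonneg | x_neg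
  · rw [Real.sqrt_eq_rpow, Real.rpow_neg x_nonneg]
  · have cos_eq_zero : Real.cos (-(1 / 2) * π) = 0 := by
      rw [neg_mul, Real.cos_neg, one_div_mul_eq_div, Real.cos_pi_div_two]
    rw [Real.sqrt_eq_zero_of_nonpos x_neg.le, inv_zero, Real.rpow_def_of_neg x_neg, cos_eq_zero,
      mul_zero]

theorem intervalIntegrable_inv_sqrt (a b : ℝ) :
    IntervalIntegrable (fun x : ℝ => (√x)⁻¹) volume a b := by
  simp only [inv_sqrt_eq_rpow]
  exact intervalIntegral.intervalIntegrable_rpow' (by norm_num)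

theorem integral_inv_sqrt (a b : ℝ) : ∫ x in a..b, (√x)⁻¹ = 2 * (√b - √a) := by
  simp only [inv_sqrt_eq_rpow]
  rw [integral_rpow (Or.inl (by norm_num)), Real.sqrt_eq_rpow, Real.sqrt_eq_rpow]
  ring_nf

theorem volume_real_Ioc_max_sub_le {u ε : ℝ} (hε : 0 ≤ ε) :
    volume.real (Ioc (max (u - ε) 0) u) ≤ ε := by
  rw [Real.volume_real_Ioc]
  exact max_le (by linarith [le_max_left (u - ε) 0]) hε

/-- The bracket in the integrand. For `0 < s < s' < u` it is the closed form of
`2π * E[(1_{B_s > 0} - 1_{B_u > 0}) * (1_{B_s' > 0} - 1_{B_u > 0})]`, where `B` is a standard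
Brownian motion. -/
noncomputable def signIncrementCov (u s s' : ℝ) : ℝ :=
  Real.arctan √((u - s') / s') + Real.arctan √((u - s) / s) - Real.arctan √((s' - s) / s)

theorem signIncrementCov_nonneg {u s s' : ℝ} (hs : 0 ≤ s) (hs'u : s' ≤ u) :
    0 ≤ signIncrementCov u s s' := by
  have arctan_le : Real.arctan √((s' - s) / s) ≤ Real.arctan √((u - s) / s) :=
    Real.arctan_strictMono.monotone (by gcongr)
  have arctan_nonneg : 0 ≤ Real.arctan √((u - s') / s') := Real.arctan_nonneg.2 (Real.sqrt_nonneg _)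
  unfold signIncrementCov
  linarith

theorem signIncrementCov_le {u s s' : ℝ} (hs : 0 < s) (hsu : s ≤ u) (hs' : 0 < s') (hs'u : s' ≤ u) :
    signIncrementCov u s s' ≤ π / 2 * √((u - s') / u) + π / 2 * √((u - s) / u) := by
  have arctan_nonneg : 0 ≤ Real.arctan √((s' - s) / s) := Real.arctan_nonneg.2 (Real.sqrt_nonneg _)
  unfold signIncrementCov
  linarith [arctan_sqrt_sub_div_le hs hsu, arctan_sqrt_sub_div_le hs' hs'u]

theorem abs_signIncrementCov_le {u ε s s' : ℝ} (hs : s ∈ Ioc (max (u - ε) 0) u)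
    (hs' : s' ∈ Ioc (max (u - ε) 0) u) : |signIncrementCov u s s'| ≤ π * √(ε / u) := by
  obtain ⟨s_gt, s_pos⟩ := max_lt_iff.1 hs.1
  obtain ⟨s'_gt, s'_pos⟩ := max_lt_iff.1 hs'.1
  have u_pos : 0 < u := s_pos.trans_le hs.2
  rw [abs_of_nonneg (signIncrementCov_nonneg s_pos.le hs'.2)]
  calc signIncrementCov u s s'
      ≤ π / 2 * √((u - s') / u) + π / 2 * √((u - s) / u) :=
        signIncrementCov_le s_pos hs.2 s'_pos hs'.2
    _ ≤ π / 2 * √(ε / u) + π / 2 * √(ε / u) := by gcongr <;> linarith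
    _ = π * √(ε / u) := by ring

theorem norm_integral_signIncrementCov_le {u ε : ℝ} (hε : 0 < ε) :
    ‖∫ s' in Ioc (max (u - ε) 0) u, ∫ s in Ioc (max (u - ε) 0) u,
        if s < s' then 1 / ε ^ 2 * signIncrementCov u s s' else 0‖ ≤ π * √(ε / u) := by
  have integrand_le : ∀ s' ∈ Ioc (max (u - ε) 0) u, ∀ s ∈ Ioc (max (u - ε) 0) u,
      ‖if s < s' then 1 / ε ^ 2 * signIncrementCov u s s' else 0‖
        ≤ 1 / ε ^ 2 * (π * √(ε / u)) := by
    intro s' hs' s hs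
    split_ifs
    · rw [norm_mul, Real.norm_of_nonneg (by positivity : 0 ≤ 1 / ε ^ 2)]
      gcongr
      exact abs_signIncrementCov_le hs hs'
    · rw [norm_zero]
      positivity
  have length_le : volume.real (Ioc (max (u - ε) 0) u) ≤ ε := volume_real_Ioc_max_sub_le hε.le
  calc _ ≤ 1 / ε ^ 2 * (π * √(ε / u)) * volume.real (Ioc (max (u - ε) 0) u)
          * volume.real (Ioc (max (u - ε) 0) u) :=
        norm_setIntegral_setIntegral_le_of_norm_le_const measure_Ioc_lt_top measure_Ioc_lt_top
          integrand_le
    _ ≤ 1 / ε ^ 2 * (π * √(ε / u)) * ε * ε := by gcongr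
    _ = π * √(ε / u) := by field_simp

theorem statement16_general {T ε : ℝ} (hT : 0 ≤ T) (hε : 0 < ε) :
    ∫ u in (0 : ℝ)..T, ∫ s' in Ioc (max (u - ε) 0) u, ∫ s in Ioc (max (u - ε) 0) u,
        (if s < s' then 1 / ε ^ 2 * signIncrementCov u s s' else 0)
      ≤ 2 * π * √T * √ε := by
  have bound_eq (u : ℝ) : π * √(ε / u) = π * √ε * (√u)⁻¹ := by
    rw [Real.sqrt_div hε.le, div_eq_mul_inv, mul_assoc]
  calc _ ≤ ∫ u in (0 : ℝ)..T, π * √ε * (√u)⁻¹ :=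
        (Real.le_norm_self _).trans <| intervalIntegral.norm_integral_le_of_norm_le hT
          (.of_forall fun u _ => (norm_integral_signIncrementCov_le hε).trans_eq (bound_eq u))
          ((intervalIntegrable_inv_sqrt 0 T).const_mul _)
    _ = 2 * π * √T * √ε := by
        rw [intervalIntegral.integral_const_mul, integral_inv_sqrt, Real.sqrt_zero]
        ring

/-- There is a constant `C > 0` such that for every `T > 0` and
`ε ∈ (0,1]`,
`∫_0^T (∫∫_{((u−ε)⁺, u]², s < s'} (1/ε²)(arctan √((u−s')/s') + arctan √((u−s)/s)
  − arctan √((s'−s)/s)) ds ds') du ≤ C √T √ε`. -/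
theorem statement16 :
    ∃ C : ℝ, 0 < C ∧ ∀ T : ℝ, 0 < T → ∀ ε ∈ Ioc (0:ℝ) 1,
      (∫ u in (0:ℝ)..T,
          ∫ s' in Ioc (max (u - ε) 0) u, ∫ s in Ioc (max (u - ε) 0) u,
            (if s < s' then
              (1 / ε ^ 2) *
                (Real.arctan (Real.sqrt ((u - s') / s'))
                  + Real.arctan (Real.sqrt ((u - s) / s))
                  - Real.arctan (Real.sqrt ((s' - s) / s)))
            else 0))
        ≤ C * Real.sqrt T * Real.sqrt ε :=
  ⟨2 * π, by positivity, fun _ hT _ hε => statement16_general hT.le hε.1⟩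
end

section
/- There exists a constant K > 0 with the following property. Let T > 0, δ ∈ (0, 1/2), C ≥ 0 and let x : [0, T] → ℝ satisfy |x(u) − x(v)| ≤ C |u − v|^δ for all u, v ∈ [0, T]. Then for every ε ∈ (0, 1] and every t ∈ [0, T], (1/ε) ∫_{(t−ε)⁺}^t x(u)⁺ · Φ( −x(t)/√(u + ε − t) ) du ≤ C ε^δ + K √ε, where Φ is the standard normal distribution function. -/
open MeasureTheory Set

/-!
Only the finite first moment of the normal law matters. Let `F` be the distribution function of
`μ`, put `m = ∫ |y| ∂μ`, and write `r = √(u + ε - t) ≤ √ε`. Markov's inequality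
`z F(-z) ≤ m` at `z = x(t) / r` gives `x(t)⁺ F(-x(t) / r) ≤ m r`. Replacing `x(t)⁺` by `x(u)⁺` costs
at most `|x(u) - x(t)| ≤ C ε ^ δ`, because `F ≤ 1`. So the integrand is at most `C ε ^ δ + m √ε`
on a window of length at most `ε`.
-/

open ProbabilityTheory

theorem stdNormalCDF_eq_cdf_gaussianReal (z : ℝ) :
    stdNormalCDF z = cdf (gaussianReal 0 1) z := by
  have gaussianPDF_eq (y : ℝ) :
      Real.exp (-y ^ 2 / 2) / √(2 * Real.pi) = gaussianPDFReal 0 1 y := by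
    simp [gaussianPDFReal, div_eq_inv_mul]
  rw [cdf_eq_real, measureReal_def, gaussianReal_apply_eq_integral 0 one_ne_zero,
    ENNReal.toReal_ofReal (integral_nonneg fun y ↦ gaussianPDFReal_nonneg 0 1 y)]
  simp only [stdNormalCDF, gaussianPDF_eq]

theorem integrable_id_gaussianReal (m : ℝ) (v : NNReal) : Integrable id (gaussianReal m v) :=
  memLp_one_iff_integrable.mp (memLp_id_gaussianReal 1)

section FirstMoment

variable {μ : Measure ℝ}

theorem integral_abs_pos [NeZero μ] [NullSingletonClass μ] (hμ : Integrable id μ) :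
    0 < ∫ y, |y| ∂μ := by
  have support_abs : Function.support (fun y : ℝ ↦ |y|) = {0}ᶜ := by
    ext y
    simp
  rw [integral_pos_iff_support_of_nonneg (fun y ↦ abs_nonneg y) hμ.abs, support_abs,
    measure_of_measure_compl_eq_zero (by rw [compl_compl, measure_singleton])]
  exact Measure.measure_univ_pos.mpr (NeZero.ne μ)

variable [IsProbabilityMeasure μ]

theorem mul_cdf_neg_le_integral_abs (hμ : Integrable id μ) (z : ℝ) :
    z * cdf μ (-z) ≤ ∫ y, |y| ∂μ := by
  rcases le_total z 0 with hz | hz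
  · exact (mul_nonpos_of_nonpos_of_nonneg hz (cdf_nonneg μ _)).trans
      (integral_nonneg fun y ↦ abs_nonneg y)
  · have Iic_subset : Iic (-z) ⊆ {y | z ≤ |y|} := fun y hy ↦
      (le_neg_of_le_neg hy).trans (neg_le_abs y)
    calc z * cdf μ (-z)
        = z * μ.real (Iic (-z)) := by rw [cdf_eq_real]
      _ ≤ z * μ.real {y | z ≤ |y|} := by gcongr; exact measure_ne_top _ _
      _ ≤ ∫ y, |y| ∂μ :=
        mul_meas_ge_le_integral_of_nonneg (ae_of_all _ fun y ↦ abs_nonneg y) hμ.abs z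

theorem max_zero_mul_cdf_neg_div_le (hμ : Integrable id μ) {r : ℝ} (hr : 0 < r) (a : ℝ) :
    max a 0 * cdf μ (-a / r) ≤ (∫ y, |y| ∂μ) * r := by
  rcases le_total a 0 with ha | ha
  · rw [max_eq_right ha, zero_mul]
    positivity
  · calc max a 0 * cdf μ (-a / r)
        = a / r * cdf μ (-(a / r)) * r := by
          rw [max_eq_left ha, neg_div]
          field_simp
      _ ≤ (∫ y, |y| ∂μ) * r := by
          gcongr
          exact mul_cdf_neg_le_integral_abs hμ _

theorem max_zero_mul_cdf_neg_div_le_abs_sub_add (hμ : Integrable id μ) {r : ℝ} (hr : 0 < r)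
    (a b : ℝ) :
    max b 0 * cdf μ (-a / r) ≤ |b - a| + (∫ y, |y| ∂μ) * r := by
  have max_sub_max_le : max b 0 - max a 0 ≤ |b - a| :=
    (le_abs_self _).trans (abs_max_sub_max_le_abs b a 0)
  calc max b 0 * cdf μ (-a / r)
      = (max b 0 - max a 0) * cdf μ (-a / r) + max a 0 * cdf μ (-a / r) := by ring
    _ ≤ |b - a| * 1 + (∫ y, |y| ∂μ) * r := by
        refine add_le_add ?_ (max_zero_mul_cdf_neg_div_le hμ hr a)
        exact mul_le_mul max_sub_max_le (cdf_le_one μ _) (cdf_nonneg μ _) (abs_nonneg _)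
    _ = |b - a| + (∫ y, |y| ∂μ) * r := by rw [mul_one]

end FirstMoment

theorem one_div_mul_intervalIntegral_le_of_norm_le {f : ℝ → ℝ} {a b ε M : ℝ} (hε : 0 < ε)
    (hM : 0 ≤ M) (hab : |b - a| ≤ ε) (hf : ∀ u ∈ uIoc a b, ‖f u‖ ≤ M) :
    (1 / ε) * ∫ u in a..b, f u ≤ M := by
  rw [one_div, inv_mul_le_iff₀ hε]
  calc ∫ u in a..b, f u
      ≤ ‖∫ u in a..b, f u‖ := Real.le_norm_self _
    _ ≤ M * |b - a| := intervalIntegral.norm_integral_le_of_norm_le_const hf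
    _ ≤ ε * M := by
        rw [mul_comm]
        gcongr

theorem statement17_general {μ : Measure ℝ} [IsProbabilityMeasure μ] (hμ : Integrable id μ)
    {T δ C ε t : ℝ} (hδ : 0 < δ) (hC : 0 ≤ C) {x : ℝ → ℝ}
    (hx : ∀ u ∈ Icc 0 T, ∀ v ∈ Icc 0 T, |x u - x v| ≤ C * |u - v| ^ δ)
    (hε : 0 < ε) (ht : t ∈ Icc 0 T) :
    (1 / ε) * (∫ u in (max (t - ε) 0)..t, max (x u) 0 * cdf μ (-(x t) / √(u + ε - t)))
      ≤ C * ε ^ δ + (∫ y, |y| ∂μ) * √ε := by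
  have window_le : max (t - ε) 0 ≤ t := max_le (by linarith) ht.1
  have window_length : |t - max (t - ε) 0| ≤ ε := by
    rw [abs_of_nonneg (sub_nonneg.mpr window_le)]
    linarith [le_max_left (t - ε) 0]
  refine one_div_mul_intervalIntegral_le_of_norm_le hε (by positivity) window_length fun u hu ↦ ?_
  rw [uIoc_of_le window_le] at hu
  obtain ⟨hu_gt, hu_pos⟩ := max_lt_iff.mp hu.1
  have abs_sub_le : |u - t| ≤ ε := abs_le.mpr ⟨by linarith, by linarith [hu.2]⟩
  rw [Real.norm_of_nonneg (mul_nonneg (le_max_right _ _) (cdf_nonneg μ _))]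
  calc max (x u) 0 * cdf μ (-(x t) / √(u + ε - t))
      ≤ |x u - x t| + (∫ y, |y| ∂μ) * √(u + ε - t) :=
        max_zero_mul_cdf_neg_div_le_abs_sub_add hμ (Real.sqrt_pos.mpr (by linarith)) _ _
    _ ≤ C * |u - t| ^ δ + (∫ y, |y| ∂μ) * √(u + ε - t) := by
        gcongr
        exact hx u ⟨hu_pos.le, hu.2.trans ht.2⟩ t ht
    _ ≤ C * ε ^ δ + (∫ y, |y| ∂μ) * √ε := by
        gcongr
        linarith [hu.2]

/-- There is a constant `K > 0` such that: for every `T > 0`,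
`δ ∈ (0,1/2)`, `C ≥ 0` and `x : [0,T] → ℝ` Hölder continuous of order `δ` with constant `C`,
for every `ε ∈ (0,1]` and `t ∈ [0,T]`,
`(1/ε) ∫_{(t−ε)⁺}^t x(u)⁺ Φ(−x(t)/√(u+ε−t)) du ≤ C ε^δ + K √ε`. -/
theorem statement17 :
    ∃ K : ℝ, 0 < K ∧ ∀ T : ℝ, 0 < T → ∀ δ ∈ Ioo (0:ℝ) (1/2), ∀ C : ℝ, 0 ≤ C →
      ∀ x : ℝ → ℝ,
        (∀ u ∈ Icc (0:ℝ) T, ∀ v ∈ Icc (0:ℝ) T, |x u - x v| ≤ C * |u - v| ^ δ) →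
        ∀ ε ∈ Ioc (0:ℝ) 1, ∀ t ∈ Icc (0:ℝ) T,
          (1 / ε) * (∫ u in (max (t - ε) 0)..t,
              max (x u) 0 * stdNormalCDF (-(x t) / Real.sqrt (u + ε - t)))
            ≤ C * ε ^ δ + K * Real.sqrt ε := by
  have := nullSingletonClass_gaussianReal (μ := 0) (one_ne_zero (α := NNReal))
  have hγ := integrable_id_gaussianReal 0 1
  refine ⟨∫ y, |y| ∂gaussianReal 0 1, integral_abs_pos hγ, ?_⟩
  intro T _ δ hδ C hC x hx ε hε t ht
  simp only [stdNormalCDF_eq_cdf_gaussianReal]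
  exact statement17_general hγ hδ.1 hC hx hε.1 ht
end

section
/- Let (B_t)_{t ≥ 0} be a standard Brownian motion, T > 0 and δ ∈ (0, 1/2). Then there exists a nonnegative random variable C with E[C²] < ∞ such that almost surely, for every ε ∈ (0, 1] and every t ∈ [0, T], (1/ε) ∫_0^t B_u⁺ · 1_{B_{(u+ε) ∧ t} = 0} du ≤ C ε^δ. -/
open MeasureTheory Set

/-!
The paths are almost surely `δ`-Hölder on `[0, T]` with a constant `K` in `L²`: this is Kolmogorov's
chaining over the dyadic numbers, with the constant kept track of. The process has no atom at `0` at
positive times, so by Fubini the zero set of almost every path is Lebesgue-null, and so is its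
translate by `-ε`. Hence the integrand vanishes at almost every `u ≤ t - ε`. On the remaining
interval `(t - ε, t]`, of length `ε`, the integrand is nonzero only if `B_t = 0`, in which case
`B_u⁺ ≤ |B_u - B_t| ≤ K ε ^ δ`.
-/

open Filter ProbabilityTheory
open scoped NNReal ENNReal Topology

section Dyadic

/-- The largest dyadic number of level `n` below `x`, for `x ≥ 0`; it is `0` for `x < 0`. -/
noncomputable def dyadicFloor (n : ℕ) (x : ℝ) : ℝ := ⌊x * 2 ^ n⌋₊ / 2 ^ n

lemma dyadicFloor_mem_Icc {x : ℝ} (hx : x ∈ Icc (0 : ℝ) 1) (n : ℕ) :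
    dyadicFloor n x ∈ Icc (0 : ℝ) 1 := by
  have hx0 : 0 ≤ x * 2 ^ n := mul_nonneg hx.1 (by positivity)
  refine ⟨by unfold dyadicFloor; positivity, (div_le_one (by positivity)).2 ?_⟩
  exact (Nat.floor_le hx0).trans (mul_le_of_le_one_left (by positivity) hx.2)

lemma floor_mul_two_pow_le {x : ℝ} (hx : x ≤ 1) (n : ℕ) : ⌊x * 2 ^ n⌋₊ ≤ 2 ^ n :=
  Nat.floor_le_of_le (by push_cast; exact mul_le_of_le_one_left (by positivity) hx)

lemma tendsto_dyadicFloor {x : ℝ} (hx : 0 ≤ x) :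
    Tendsto (fun n ↦ dyadicFloor n x) atTop (𝓝 x) :=
  (tendsto_nat_floor_mul_div_atTop hx).comp (tendsto_pow_atTop_atTop_of_one_lt one_lt_two)

variable {E : Type*} [PseudoMetricSpace E] {f : ℝ → E} {A r : ℝ≥0}

/-- The size of the increment of `f` over the `k`-th dyadic interval of level `n`, counted
from `k = 0`. -/
noncomputable def dyadicIncrement (f : ℝ → E) (n k : ℕ) : ℝ≥0∞ :=
  edist (f (k / 2 ^ n)) (f ((k + 1) / 2 ^ n))

/-- On `[0, 1]`, the dyadic increments of `f` of level `n` are at most `A * r ^ n`, for every `n`.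
This is the input of the chaining argument. -/
def DyadicIncrementsLE (f : ℝ → E) (A r : ℝ≥0) : Prop :=
  ∀ n k : ℕ, k < 2 ^ n → dyadicIncrement f n k ≤ A * r ^ n

namespace DyadicIncrementsLE

lemma dist_le_of_le_add_one (hf : DyadicIncrementsLE f A r) {n a b : ℕ} (hab : a ≤ b)
    (hba : b ≤ a + 1) (hb : b ≤ 2 ^ n) :
    dist (f (a / 2 ^ n)) (f (b / 2 ^ n)) ≤ A * r ^ n := by
  obtain rfl | rfl : b = a ∨ b = a + 1 := by omega
  · rw [dist_self]
    positivity
  · have h := hf n a hb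
    rw [dyadicIncrement, edist_nndist] at h
    rw [dist_nndist]
    exact_mod_cast h

lemma dist_dyadicFloor_succ_le (hf : DyadicIncrementsLE f A r) {x : ℝ} (hx : x ∈ Icc (0 : ℝ) 1)
    (n : ℕ) :
    dist (f (dyadicFloor n x)) (f (dyadicFloor (n + 1) x)) ≤ A * r ^ (n + 1) := by
  have hx0 : 0 ≤ x * 2 ^ n := mul_nonneg hx.1 (by positivity)
  have mul_two_pow_succ : x * 2 ^ (n + 1) = 2 * (x * 2 ^ n) := by ring
  have coarse_eq_fine : dyadicFloor n x = (2 * ⌊x * 2 ^ n⌋₊ : ℕ) / 2 ^ (n + 1) := by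
    rw [dyadicFloor, pow_succ]
    push_cast
    field_simp
  have two_mul_floor_le : 2 * ⌊x * 2 ^ n⌋₊ ≤ ⌊x * 2 ^ (n + 1)⌋₊ := by
    refine Nat.le_floor ?_
    push_cast
    linarith [Nat.floor_le hx0]
  have floor_lt_two_mul_floor : ⌊x * 2 ^ (n + 1)⌋₊ < 2 * ⌊x * 2 ^ n⌋₊ + 2 := by
    refine (Nat.floor_lt (mul_nonneg hx.1 (by positivity))).2 ?_
    push_cast
    linarith [Nat.lt_floor_add_one (x * 2 ^ n)]
  rw [coarse_eq_fine]
  exact hf.dist_le_of_le_add_one two_mul_floor_le (Nat.lt_succ_iff.1 floor_lt_two_mul_floor)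
    (floor_mul_two_pow_le hx.2 _)

lemma dist_dyadicFloor_le (hf : DyadicIncrementsLE f A r) (hr : r < 1)
    (hfc : ContinuousOn f (Icc 0 1)) {x : ℝ} (hx : x ∈ Icc (0 : ℝ) 1) (n : ℕ) :
    dist (f (dyadicFloor n x)) (f x) ≤ A * r * r ^ n / (1 - r) := by
  have tendsto_f : Tendsto (fun n ↦ f (dyadicFloor n x)) atTop (𝓝 (f x)) :=
    (hfc x hx).tendsto.comp <| tendsto_nhdsWithin_iff.2
      ⟨tendsto_dyadicFloor hx.1, .of_forall (dyadicFloor_mem_Icc hx)⟩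
  refine dist_le_of_le_geometric_of_tendsto _ _ (by exact_mod_cast hr) (fun m ↦ ?_) tendsto_f n
  rw [mul_assoc, ← pow_succ']
  exact hf.dist_dyadicFloor_succ_le hx m

lemma dist_dyadicFloor_dyadicFloor_le (hf : DyadicIncrementsLE f A r) {x y : ℝ} (hx : 0 ≤ x)
    (hy : y ≤ 1) (hxy : x ≤ y) {n : ℕ} (hn : y - x ≤ (1 / 2) ^ n) :
    dist (f (dyadicFloor n x)) (f (dyadicFloor n y)) ≤ A * r ^ n := by
  have scaled_le : y * 2 ^ n ≤ x * 2 ^ n + 1 := by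
    rw [one_div, inv_pow, ← one_div, le_div_iff₀ (by positivity)] at hn
    linarith
  refine hf.dist_le_of_le_add_one (Nat.floor_mono (by gcongr)) ?_ (floor_mul_two_pow_le hy n)
  rw [← Nat.floor_add_one (by positivity)]
  exact Nat.floor_mono scaled_le

lemma dist_le_of_sub_le (hf : DyadicIncrementsLE f A r) (hr : r < 1)
    (hfc : ContinuousOn f (Icc 0 1)) {x y : ℝ} (hx : x ∈ Icc (0 : ℝ) 1) (hy : y ∈ Icc (0 : ℝ) 1)
    (hxy : x ≤ y) {n : ℕ} (hn : y - x ≤ (1 / 2) ^ n) :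
    dist (f x) (f y) ≤ A * ((1 + r) / (1 - r)) * r ^ n := by
  have hr' : (0 : ℝ) < 1 - r := sub_pos.2 (by exact_mod_cast hr)
  calc dist (f x) (f y)
      ≤ dist (f x) (f (dyadicFloor n x)) + dist (f (dyadicFloor n x)) (f (dyadicFloor n y))
        + dist (f (dyadicFloor n y)) (f y) := dist_triangle4 _ _ _ _
    _ ≤ A * r * r ^ n / (1 - r) + A * r ^ n + A * r * r ^ n / (1 - r) := by
        rw [dist_comm (f x)]
        gcongr
        · exact hf.dist_dyadicFloor_le hr hfc hx n
        · exact hf.dist_dyadicFloor_dyadicFloor_le hx.1 hy.2 hxy hn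
        · exact hf.dist_dyadicFloor_le hr hfc hy n
    _ = A * ((1 + r) / (1 - r)) * r ^ n := by
        field_simp
        ring

end DyadicIncrementsLE

/-- The `δ`-Hölder constant on `[0, 1]` which chaining yields for a function whose dyadic increments
of level `n` are at most `((1 / 2) ^ δ) ^ n`. The subtraction is not truncated when `δ > 0`. -/
noncomputable def dyadicHolderConst (δ : ℝ≥0) : ℝ≥0 :=
  (1 + (1 / 2) ^ (δ : ℝ)) / (1 - (1 / 2) ^ (δ : ℝ)) / (1 / 2) ^ (δ : ℝ)

lemma half_rpow_lt_one {δ : ℝ≥0} (hδ : 0 < δ) : (1 / 2 : ℝ≥0) ^ (δ : ℝ) < 1 :=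
  NNReal.rpow_lt_one (by norm_num) (by exact_mod_cast hδ)

lemma DyadicIncrementsLE.dist_le_mul_rpow {δ : ℝ≥0} (hδ : 0 < δ)
    (hf : DyadicIncrementsLE f A ((1 / 2) ^ (δ : ℝ))) (hfc : ContinuousOn f (Icc 0 1)) {x y : ℝ}
    (hx : x ∈ Icc (0 : ℝ) 1) (hy : y ∈ Icc (0 : ℝ) 1) (hxy : x < y) :
    dist (f x) (f y) ≤ (A * dyadicHolderConst δ : ℝ≥0) * (y - x) ^ (δ : ℝ) := by
  set r : ℝ≥0 := (1 / 2) ^ (δ : ℝ) with hr_def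
  have hr : r < 1 := half_rpow_lt_one hδ
  have hr0 : 0 < r := NNReal.rpow_pos (by norm_num)
  obtain ⟨n, lt_sub, sub_le⟩ := exists_nat_pow_near_of_lt_one (sub_pos.2 hxy)
    (by linarith [hx.1, hy.2]) (one_half_pos (α := ℝ)) one_half_lt_one
  have pow_le : (r : ℝ) ^ (n + 1) ≤ (y - x) ^ (δ : ℝ) := by
    rw [hr_def, NNReal.coe_rpow, Real.rpow_pow_comm (NNReal.coe_nonneg _)]
    push_cast
    gcongr
  calc dist (f x) (f y) ≤ A * ((1 + r) / (1 - r)) * r ^ n :=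
        hf.dist_le_of_sub_le hr hfc hx hy hxy.le sub_le
    _ = (A * dyadicHolderConst δ : ℝ≥0) * r ^ (n + 1) := by
        rw [dyadicHolderConst, ← hr_def, pow_succ]
        push_cast [NNReal.coe_sub hr.le]
        field_simp
    _ ≤ _ := by gcongr

lemma holderOnWith_of_dist_le_of_lt {C δ : ℝ≥0} {s : Set ℝ}
    (hf : ∀ x ∈ s, ∀ y ∈ s, x < y → dist (f x) (f y) ≤ C * (y - x) ^ (δ : ℝ)) :
    HolderOnWith C δ f s := by
  intro x hx y hy
  wlog hxy : x ≤ y generalizing x y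
  · rw [edist_comm, edist_comm x]
    exact this y hy x hx (le_of_not_ge hxy)
  obtain rfl | hlt := hxy.eq_or_lt
  · rw [edist_self]
    positivity
  rw [edist_comm x, edist_dist, edist_dist, Real.dist_eq, abs_of_pos (sub_pos.2 hlt),
    ENNReal.ofReal_rpow_of_nonneg (sub_nonneg.2 hxy) δ.coe_nonneg, ← ENNReal.ofReal_coe_nnreal,
    ← ENNReal.ofReal_mul C.coe_nonneg]
  exact ENNReal.ofReal_le_ofReal (hf x hx y hy hlt)

lemma DyadicIncrementsLE.holderOnWith {δ : ℝ≥0} (hδ : 0 < δ)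
    (hf : DyadicIncrementsLE f A ((1 / 2) ^ (δ : ℝ))) (hfc : ContinuousOn f (Icc 0 1)) :
    HolderOnWith (A * dyadicHolderConst δ) δ f (Icc 0 1) :=
  holderOnWith_of_dist_le_of_lt fun _ hx _ hy ↦ hf.dist_le_mul_rpow hδ hfc hx hy

lemma holderOnWith_of_comp_mul_left {C δ T : ℝ≥0} (hT : 0 < T)
    (hf : HolderOnWith C δ (fun x ↦ f (T * x)) (Icc 0 1)) :
    HolderOnWith (C * T⁻¹ ^ (δ : ℝ)) δ f (Icc 0 T) := by
  have hT' : (0 : ℝ) < T := hT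
  have div_lipschitz : LipschitzWith T⁻¹ (fun x : ℝ ↦ (T : ℝ)⁻¹ * x) := by
    refine LipschitzWith.of_dist_le_mul fun x y ↦ ?_
    rw [dist_eq_norm, ← mul_sub, norm_mul, dist_eq_norm]
    simp
  have maps_to : MapsTo (fun x : ℝ ↦ (T : ℝ)⁻¹ * x) (Icc 0 T) (Icc 0 1) := fun x hx ↦
    ⟨mul_nonneg (by positivity) hx.1, (inv_mul_le_one₀ hT').2 hx.2⟩
  have h := hf.comp (holderOnWith_one.2 div_lipschitz.lipschitzOnWith) maps_to
  simpa only [mul_one, Function.comp_def, mul_inv_cancel_left₀ hT'.ne'] using h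

end Dyadic

section Kolmogorov

variable {Ω E : Type*} [MeasurableSpace Ω] [PseudoMetricSpace E] {P : Measure Ω} {X : ℝ → Ω → E}
  {p q : ℝ} {M δ : ℝ≥0}

lemma natCast_div_two_pow_mem_Icc {n k : ℕ} (hk : k ≤ 2 ^ n) :
    (k : ℝ) / 2 ^ n ∈ Icc (0 : ℝ) 1 :=
  ⟨by positivity, (div_le_one (by positivity)).2 (by exact_mod_cast hk)⟩

lemma natCast_add_one_div_two_pow_mem_Icc {n k : ℕ} (hk : k < 2 ^ n) :
    ((k : ℝ) + 1) / 2 ^ n ∈ Icc (0 : ℝ) 1 := by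
  exact_mod_cast natCast_div_two_pow_mem_Icc (Nat.succ_le_of_lt hk)

lemma measurable_dyadicIncrement
    (hX : IsKolmogorovProcess (fun t : Icc (0 : ℝ) 1 ↦ X t) P p q M) {n k : ℕ} (hk : k < 2 ^ n) :
    Measurable fun ω ↦ dyadicIncrement (X · ω) n k :=
  hX.measurable_edist (s := ⟨_, natCast_div_two_pow_mem_Icc hk.le⟩)
    (t := ⟨_, natCast_add_one_div_two_pow_mem_Icc hk⟩)

lemma lintegral_dyadicIncrement_rpow_le
    (hX : IsKolmogorovProcess (fun t : Icc (0 : ℝ) 1 ↦ X t) P p q M) {n k : ℕ} (hk : k < 2 ^ n) :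
    ∫⁻ ω, dyadicIncrement (X · ω) n k ^ p ∂P ≤ M * ((2 : ℝ≥0∞) ^ (-q)) ^ n := by
  have mesh_eq : edist ((k : ℝ) / 2 ^ n) ((k + 1) / 2 ^ n) = ((2 : ℝ≥0∞) ^ n)⁻¹ := by
    rw [edist_comm, edist_dist, Real.dist_eq, ← sub_div, add_sub_cancel_left,
      abs_of_nonneg (by positivity), one_div, ENNReal.ofReal_inv_of_pos (by positivity),
      ENNReal.ofReal_pow zero_le_two, ENNReal.ofReal_ofNat]
  have h := hX.kolmogorovCondition ⟨_, natCast_div_two_pow_mem_Icc hk.le⟩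
    ⟨_, natCast_add_one_div_two_pow_mem_Icc hk⟩
  rwa [Subtype.edist_eq, mesh_eq, ENNReal.inv_rpow, ← ENNReal.rpow_natCast_mul, mul_comm (n : ℝ),
    ENNReal.rpow_mul_natCast, ENNReal.inv_pow, ← ENNReal.rpow_neg] at h

/-- The sum over all levels `n` of the `p`-th powers of the dyadic increments of `f` in `[0, 1]`,
weighted by `2 ^ (δ p n)`. Its `p`-th root bounds each level-`n` increment by a multiple
of `2 ^ (-δ n)`. -/
noncomputable def dyadicIncrementSum (p : ℝ) (δ : ℝ≥0) (f : ℝ → E) : ℝ≥0∞ :=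
  ∑' n : ℕ, ((2 : ℝ≥0∞) ^ (δ * p)) ^ n * ∑ k ∈ Finset.range (2 ^ n), dyadicIncrement f n k ^ p

lemma measurable_sum_dyadicIncrement_rpow
    (hX : IsKolmogorovProcess (fun t : Icc (0 : ℝ) 1 ↦ X t) P p q M) (n : ℕ) :
    Measurable fun ω ↦ ∑ k ∈ Finset.range (2 ^ n), dyadicIncrement (X · ω) n k ^ p :=
  Finset.measurable_fun_sum _ fun _ hk ↦
    (measurable_dyadicIncrement hX (Finset.mem_range.1 hk)).pow_const p

lemma measurable_dyadicIncrementSum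
    (hX : IsKolmogorovProcess (fun t : Icc (0 : ℝ) 1 ↦ X t) P p q M) :
    Measurable fun ω ↦ dyadicIncrementSum p δ (X · ω) :=
  Measurable.tsum fun n ↦ (measurable_sum_dyadicIncrement_rpow hX n).const_mul _

lemma lintegral_sum_dyadicIncrement_rpow_le
    (hX : IsKolmogorovProcess (fun t : Icc (0 : ℝ) 1 ↦ X t) P p q M) (n : ℕ) :
    ∫⁻ ω, ∑ k ∈ Finset.range (2 ^ n), dyadicIncrement (X · ω) n k ^ p ∂P
      ≤ M * ((2 : ℝ≥0∞) ^ (1 - q)) ^ n := by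
  have two_mul_rpow : (2 : ℝ≥0∞) * 2 ^ (-q) = 2 ^ (1 - q) := by
    rw [sub_eq_add_neg, ENNReal.rpow_add _ _ two_ne_zero ENNReal.ofNat_ne_top, ENNReal.rpow_one]
  calc _ = ∑ k ∈ Finset.range (2 ^ n), ∫⁻ ω, dyadicIncrement (X · ω) n k ^ p ∂P :=
        lintegral_finsetSum' _ fun _ hk ↦
          ((measurable_dyadicIncrement hX (Finset.mem_range.1 hk)).pow_const p).aemeasurable
    _ ≤ ∑ _k ∈ Finset.range (2 ^ n), M * ((2 : ℝ≥0∞) ^ (-q)) ^ n :=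
        Finset.sum_le_sum fun _ hk ↦ lintegral_dyadicIncrement_rpow_le hX (Finset.mem_range.1 hk)
    _ = M * ((2 : ℝ≥0∞) ^ (1 - q)) ^ n := by
        rw [Finset.sum_const, Finset.card_range, nsmul_eq_mul, ← two_mul_rpow, mul_pow]
        push_cast
        ring

lemma lintegral_dyadicIncrementSum_lt_top
    (hX : IsKolmogorovProcess (fun t : Icc (0 : ℝ) 1 ↦ X t) P p q M) (hδ : δ < (q - 1) / p) :
    ∫⁻ ω, dyadicIncrementSum p δ (X · ω) ∂P < ∞ := by
  have ratio_lt_one : (2 : ℝ≥0∞) ^ (δ * p + (1 - q)) < 1 := by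
    refine ENNReal.rpow_lt_one_of_one_lt_of_neg ENNReal.one_lt_two ?_
    linarith [(lt_div_iff₀ hX.p_pos).1 hδ]
  calc ∫⁻ ω, dyadicIncrementSum p δ (X · ω) ∂P
      = ∑' n : ℕ, ((2 : ℝ≥0∞) ^ (δ * p)) ^ n *
          ∫⁻ ω, ∑ k ∈ Finset.range (2 ^ n), dyadicIncrement (X · ω) n k ^ p ∂P := by
        unfold dyadicIncrementSum
        have hmeas := measurable_sum_dyadicIncrement_rpow hX
        rw [lintegral_tsum fun n ↦ ((hmeas n).const_mul _).aemeasurable]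
        simp_rw [lintegral_const_mul _ (hmeas _)]
    _ ≤ ∑' n : ℕ, ((2 : ℝ≥0∞) ^ (δ * p)) ^ n * (M * ((2 : ℝ≥0∞) ^ (1 - q)) ^ n) := by
        gcongr with n
        exact lintegral_sum_dyadicIncrement_rpow_le hX n
    _ = M * ∑' n : ℕ, ((2 : ℝ≥0∞) ^ (δ * p + (1 - q))) ^ n := by
        simp_rw [ENNReal.rpow_add _ _ two_ne_zero ENNReal.ofNat_ne_top, mul_pow,
          mul_left_comm _ (M : ℝ≥0∞), ENNReal.tsum_mul_left]
    _ < ∞ := by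
        rw [ENNReal.tsum_geometric]
        exact ENNReal.mul_lt_top ENNReal.coe_lt_top
          (ENNReal.inv_lt_top.2 (tsub_pos_of_lt ratio_lt_one))

lemma dyadicIncrement_rpow_le_dyadicIncrementSum {f : ℝ → E} {n k : ℕ} (hk : k < 2 ^ n) :
    ((2 : ℝ≥0∞) ^ (δ * p)) ^ n * dyadicIncrement f n k ^ p ≤ dyadicIncrementSum p δ f := calc
  _ ≤ ((2 : ℝ≥0∞) ^ (δ * p)) ^ n * ∑ k ∈ Finset.range (2 ^ n), dyadicIncrement f n k ^ p := by
    gcongr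
    exact Finset.single_le_sum (f := fun k ↦ dyadicIncrement f n k ^ p) (fun _ _ ↦ zero_le)
      (Finset.mem_range.2 hk)
  _ ≤ dyadicIncrementSum p δ f := ENNReal.le_tsum n

lemma dyadicIncrementsLE_of_dyadicIncrementSum_ne_top {f : ℝ → E} (hp : 0 < p)
    (hf : dyadicIncrementSum p δ f ≠ ∞) :
    DyadicIncrementsLE f (dyadicIncrementSum p δ f ^ p⁻¹).toNNReal ((1 / 2) ^ (δ : ℝ)) := by
  intro n k hk
  have weighted_le :
      ((2 : ℝ≥0∞) ^ (δ : ℝ)) ^ n * dyadicIncrement f n k ≤ dyadicIncrementSum p δ f ^ p⁻¹ := by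
    rw [ENNReal.le_rpow_inv_iff hp, ENNReal.mul_rpow_of_nonneg _ _ hp.le,
      ← ENNReal.rpow_natCast_mul, mul_comm (n : ℝ), ENNReal.rpow_mul_natCast, ← ENNReal.rpow_mul]
    exact dyadicIncrement_rpow_le_dyadicIncrementSum hk
  have half_rpow_eq_inv : (((1 / 2 : ℝ≥0) ^ (δ : ℝ) : ℝ≥0) : ℝ≥0∞) = (2 ^ (δ : ℝ))⁻¹ := by
    rw [ENNReal.coe_rpow_of_nonneg _ δ.coe_nonneg, one_div, ENNReal.coe_inv two_ne_zero,
      ENNReal.inv_rpow, ENNReal.coe_ofNat]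
  rw [ENNReal.coe_toNNReal (ENNReal.rpow_ne_top_of_nonneg (by positivity) hf), half_rpow_eq_inv,
    ← ENNReal.inv_pow, ← div_eq_mul_inv,
    ENNReal.le_div_iff_mul_le (.inl (by simp)) (.inl (by simp)), mul_comm]
  exact weighted_le

lemma memLp_toReal_rpow_inv {S : Ω → ℝ≥0∞} (hp : 0 < p) (hS : Measurable S)
    (hSint : ∫⁻ ω, S ω ∂P < ∞) :
    MemLp (fun ω ↦ (S ω ^ p⁻¹).toReal) (ENNReal.ofReal p) P := by
  refine ⟨(hS.pow_const _).ennreal_toReal.aestronglyMeasurable, ?_⟩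
  rw [eLpNorm_lt_top_iff_lintegral_rpow_enorm_lt_top (by simpa using hp) ENNReal.ofReal_ne_top,
    ENNReal.toReal_ofReal hp.le]
  refine (lintegral_mono fun ω ↦ ?_).trans_lt hSint
  calc ‖(S ω ^ p⁻¹).toReal‖ₑ ^ p ≤ (S ω ^ p⁻¹) ^ p := by
        gcongr
        rw [Real.enorm_of_nonneg ENNReal.toReal_nonneg]
        exact ENNReal.ofReal_toReal_le
    _ = S ω := ENNReal.rpow_inv_rpow hp.ne' _

theorem exists_memLp_holderOnWith_unitInterval
    (hX : IsKolmogorovProcess (fun t : Icc (0 : ℝ) 1 ↦ X t) P p q M)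
    (hXc : ∀ ω, ContinuousOn (X · ω) (Icc 0 1)) (hδ0 : 0 < δ) (hδ : δ < (q - 1) / p) :
    ∃ K : Ω → ℝ≥0, Measurable K ∧ MemLp (fun ω ↦ (K ω : ℝ)) (ENNReal.ofReal p) P ∧
      ∀ᵐ ω ∂P, HolderOnWith (K ω) δ (X · ω) (Icc 0 1) := by
  have hmeas := measurable_dyadicIncrementSum (δ := δ) hX
  have hint := lintegral_dyadicIncrementSum_lt_top hX hδ
  refine ⟨fun ω ↦ (dyadicIncrementSum p δ (X · ω) ^ p⁻¹).toNNReal * dyadicHolderConst δ,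
    (hmeas.pow_const _).ennreal_toNNReal.mul_const _, ?_, ?_⟩
  · exact (memLp_toReal_rpow_inv hX.p_pos hmeas hint).mul_const _
  · filter_upwards [ae_lt_top hmeas hint.ne] with ω hω
    exact (dyadicIncrementsLE_of_dyadicIncrementSum_ne_top hX.p_pos hω.ne).holderOnWith hδ0 (hXc ω)

lemma isKolmogorovProcess_comp_mul_left {T : ℝ≥0}
    (hX : IsKolmogorovProcess (fun t : Icc (0 : ℝ) T ↦ X t) P p q M) :
    IsKolmogorovProcess (fun t : Icc (0 : ℝ) 1 ↦ X (T * t)) P p q (M * T ^ q) := by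
  have mul_mem (t : Icc (0 : ℝ) 1) : (T : ℝ) * t ∈ Icc (0 : ℝ) T :=
    ⟨mul_nonneg T.coe_nonneg t.2.1, mul_le_of_le_one_right T.coe_nonneg t.2.2⟩
  refine ⟨fun s t ↦ hX.measurablePair ⟨_, mul_mem s⟩ ⟨_, mul_mem t⟩, fun s t ↦ ?_, hX.p_pos,
    hX.q_pos⟩
  refine (hX.kolmogorovCondition ⟨_, mul_mem s⟩ ⟨_, mul_mem t⟩).trans_eq ?_
  have edist_mul : edist ((T : ℝ) * s) (T * t) = T * edist s t := by
    simpa [ENNReal.smul_def, Subtype.edist_eq] using edist_smul₀ (T : ℝ) (s : ℝ) t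
  rw [Subtype.edist_eq, edist_mul, ENNReal.mul_rpow_of_nonneg _ _ hX.q_pos.le, ENNReal.coe_mul,
    ENNReal.coe_rpow_of_nonneg _ hX.q_pos.le, mul_assoc]

theorem exists_memLp_holderOnWith {T : ℝ≥0} (hT : 0 < T)
    (hX : IsKolmogorovProcess (fun t : Icc (0 : ℝ) T ↦ X t) P p q M)
    (hXc : ∀ ω, ContinuousOn (X · ω) (Icc 0 T)) (hδ0 : 0 < δ) (hδ : δ < (q - 1) / p) :
    ∃ K : Ω → ℝ≥0, Measurable K ∧ MemLp (fun ω ↦ (K ω : ℝ)) (ENNReal.ofReal p) P ∧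
      ∀ᵐ ω ∂P, HolderOnWith (K ω) δ (X · ω) (Icc 0 T) := by
  have hXc' (ω : Ω) : ContinuousOn (fun t ↦ X (T * t) ω) (Icc 0 1) :=
    (hXc ω).comp (by fun_prop) fun t ht ↦
      ⟨mul_nonneg T.coe_nonneg ht.1, mul_le_of_le_one_right T.coe_nonneg ht.2⟩
  obtain ⟨K, hKm, hKp, hK⟩ := exists_memLp_holderOnWith_unitInterval
    (X := fun t ↦ X (T * t)) (isKolmogorovProcess_comp_mul_left hX) hXc' hδ0 hδ
  exact ⟨fun ω ↦ K ω * T⁻¹ ^ (δ : ℝ), hKm.mul_const _, hKp.mul_const _,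
    hK.mono fun ω hω ↦ holderOnWith_of_comp_mul_left (f := (X · ω)) hT hω⟩

end Kolmogorov

section ZeroSet

lemma ae_ae_ne_of_continuousOn {Ω E : Type*} [MeasurableSpace Ω] {P : Measure Ω} [SFinite P]
    [TopologicalSpace E] [TopologicalSpace.PseudoMetrizableSpace E] [MeasurableSpace E]
    [BorelSpace E] [MeasurableSingletonClass E] {X : ℝ → Ω → E} {a b : ℝ} (hab : a ≤ b)
    (hXm : ∀ t ∈ Icc a b, Measurable (X t)) (hXc : ∀ ω, ContinuousOn (X · ω) (Icc a b)) {c : E}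
    (hne : ∀ᵐ t ∂volume.restrict (Icc a b), ∀ᵐ ω ∂P, X t ω ≠ c) :
    ∀ᵐ ω ∂P, ∀ᵐ t ∂volume.restrict (Icc a b), X t ω ≠ c := by
  have joint_measurable : Measurable (Function.uncurry fun t ω ↦ X (projIcc a b hab t) ω) :=
    measurable_uncurry_of_continuous_of_measurable
      (fun ω ↦ (hXc ω).domRestrict.comp continuous_projIcc) fun t ↦ hXm _ (projIcc a b hab t).2
  have projected : ∀ᵐ ω ∂P, ∀ᵐ t ∂volume.restrict (Icc a b), X (projIcc a b hab t) ω ≠ c := by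
    refine (Measure.ae_ae_comm ?_).1 ?_
    · exact (joint_measurable (measurableSet_singleton c)).compl
    · filter_upwards [hne, ae_restrict_mem measurableSet_Icc] with t ht hmem
      simpa only [projIcc_of_mem hab hmem] using ht
  filter_upwards [projected] with ω hω
  filter_upwards [hω, ae_restrict_mem measurableSet_Icc] with t ht hmem
  simpa only [projIcc_of_mem hab hmem] using ht

variable {f : ℝ → ℝ} {K δ : ℝ≥0} {ε t : ℝ}

lemma posPart_mul_indicator_le_of_lt_add (hf : HolderOnWith K δ f (Icc 0 t)) {u : ℝ}
    (hu : u ∈ Icc 0 t) (hut : t < u + ε) :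
    max (f u) 0 * (if f (min (u + ε) t) = 0 then (1 : ℝ) else 0) ≤ K * ε ^ (δ : ℝ) := by
  have hε : 0 ≤ ε := by linarith [hu.2]
  have bound_nonneg : 0 ≤ K * ε ^ (δ : ℝ) := by positivity
  rw [min_eq_right hut.le]
  split_ifs with hft
  · have dist_le : dist u t ≤ ε := by
      rw [dist_comm, Real.dist_eq, abs_of_nonneg (sub_nonneg.2 hu.2)]
      linarith
    have abs_le := hf.dist_le_of_le hu (right_mem_Icc.2 (hu.1.trans hu.2)) dist_le
    rw [hft, Real.dist_eq, sub_zero] at abs_le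
    rw [mul_one]
    exact max_le ((le_abs_self _).trans abs_le) bound_nonneg
  · rwa [mul_zero]

lemma ae_posPart_mul_indicator_le (hε : 0 ≤ ε) (hf : HolderOnWith K δ f (Icc 0 t))
    (hne : ∀ᵐ u ∂volume.restrict (Icc 0 t), f u ≠ 0) :
    ∀ᵐ u ∂volume.restrict (Ioc 0 t),
      max (f u) 0 * (if f (min (u + ε) t) = 0 then (1 : ℝ) else 0)
        ≤ (Ioc (t - ε) t).indicator (fun _ ↦ K * ε ^ (δ : ℝ)) u := by
  have shifted_ne : ∀ᵐ u : ℝ, u + ε ∈ Icc 0 t → f (u + ε) ≠ 0 :=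
    (measurePreserving_add_right volume ε).quasiMeasurePreserving.ae
      ((ae_restrict_iff' measurableSet_Icc).1 hne)
  filter_upwards [ae_restrict_of_ae shifted_ne, ae_restrict_mem measurableSet_Ioc] with u hshift hu
  rcases le_or_gt (u + ε) t with hle | hlt
  · rw [min_eq_left hle, if_neg (hshift ⟨by linarith [hu.1], hle⟩), mul_zero]
    exact indicator_nonneg (fun _ _ ↦ by positivity) u
  · rw [indicator_of_mem (show u ∈ Ioc (t - ε) t from ⟨by linarith, hu.2⟩)]
    exact posPart_mul_indicator_le_of_lt_add hf (Ioc_subset_Icc_self hu) hlt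

lemma inv_mul_integral_posPart_indicator_le (hε : 0 < ε) (ht : 0 ≤ t)
    (hf : HolderOnWith K δ f (Icc 0 t)) (hne : ∀ᵐ u ∂volume.restrict (Icc 0 t), f u ≠ 0) :
    (1 / ε) * (∫ u in (0 : ℝ)..t, max (f u) 0 * (if f (min (u + ε) t) = 0 then (1 : ℝ) else 0))
      ≤ K * ε ^ (δ : ℝ) := by
  have bound_integrable : Integrable ((Ioc (t - ε) t).indicator fun _ ↦ K * ε ^ (δ : ℝ)) :=
    (integrable_indicator_iff measurableSet_Ioc).2 (integrableOn_const (by simp))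
  rw [intervalIntegral.integral_of_le ht, one_div, inv_mul_le_iff₀ hε]
  calc _ ≤ ∫ u in Ioc 0 t, (Ioc (t - ε) t).indicator (fun _ ↦ K * ε ^ (δ : ℝ)) u :=
        integral_mono_of_nonneg (.of_forall fun u ↦ by positivity) bound_integrable.integrableOn
          (ae_posPart_mul_indicator_le hε.le hf hne)
    _ ≤ ∫ u, (Ioc (t - ε) t).indicator (fun _ ↦ K * ε ^ (δ : ℝ)) u :=
        setIntegral_le_integral bound_integrable
          (.of_forall fun u ↦ indicator_nonneg (fun _ _ ↦ by positivity) u)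
    _ = ε * (K * ε ^ (δ : ℝ)) := by
        rw [integral_indicator_const _ measurableSet_Ioc, Real.volume_real_Ioc_of_le (by linarith),
          sub_sub_cancel, smul_eq_mul]

end ZeroSet

lemma lintegral_enorm_rpow_gaussianReal_lt_top {p : ℝ} (hp : 0 < p) (μ : ℝ) (v : ℝ≥0) :
    ∫⁻ x, ‖x‖ₑ ^ p ∂gaussianReal μ v < ∞ := by
  have h := lintegral_rpow_enorm_lt_top_of_eLpNorm_lt_top (by simpa using hp)
    ENNReal.ofReal_ne_top
    (memLp_id_gaussianReal' (μ := μ) (v := v) (ENNReal.ofReal p) ENNReal.ofReal_ne_top).2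
  simpa only [ENNReal.toReal_ofReal hp.le, id] using h

lemma lintegral_enorm_rpow_gaussianReal_zero {p : ℝ} (hp : 0 ≤ p) (v : ℝ≥0) :
    ∫⁻ x, ‖x‖ₑ ^ p ∂gaussianReal 0 v = v ^ (p / 2) * ∫⁻ x, ‖x‖ₑ ^ p ∂gaussianReal 0 1 := by
  have map_sqrt : (gaussianReal 0 1).map (√v * ·) = gaussianReal 0 v := by
    rw [gaussianReal_map_const_mul, mul_zero, mul_one]
    congr 1
    ext
    exact Real.sq_sqrt v.coe_nonneg
  have enorm_sqrt : ‖√(v : ℝ)‖ₑ ^ p = (v : ℝ≥0∞) ^ (p / 2) := by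
    rw [Real.enorm_of_nonneg (Real.sqrt_nonneg _), Real.sqrt_eq_rpow,
      ← ENNReal.ofReal_rpow_of_nonneg v.coe_nonneg (by norm_num), ENNReal.ofReal_coe_nnreal,
      ← ENNReal.rpow_mul, one_div_mul_eq_div]
  rw [← map_sqrt, lintegral_map (by fun_prop) (by fun_prop), ← enorm_sqrt,
    ← lintegral_const_mul _ (by fun_prop)]
  simp_rw [enorm_mul, ENNReal.mul_rpow_of_nonneg _ _ hp]

namespace IsStandardBrownianMotion

variable {Ω : Type*} [MeasurableSpace Ω] {P : Measure Ω} {B : ℝ → Ω → ℝ}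

lemma isKolmogorovProcess (hB : IsStandardBrownianMotion P B) (T : ℝ) {p : ℝ} (hp : 0 < p) :
    IsKolmogorovProcess (fun t : Icc (0 : ℝ) T ↦ B t) P p (p / 2)
      (∫⁻ x, ‖x‖ₑ ^ p ∂gaussianReal 0 1).toNNReal := by
  refine .mk_of_secondCountableTopology (fun t ↦ hB.measurable t) (fun s t ↦ ?_) hp (half_pos hp)
  wlog hst : s ≤ t generalizing s t
  · simp_rw [edist_comm (B s _), edist_comm s]
    exact this t s (le_of_not_ge hst)
  have edist_eq : edist s t = (((t : ℝ) - s).toNNReal : ℝ≥0∞) := by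
    rw [edist_comm, Subtype.edist_eq, edist_dist, Real.dist_eq,
      abs_of_nonneg (sub_nonneg.2 (Subtype.coe_le_coe.2 hst)), ENNReal.ofReal]
  have increment_measurable : Measurable fun ω ↦ B t ω - B s ω :=
    (hB.measurable t).sub (hB.measurable s)
  calc ∫⁻ ω, edist (B s ω) (B t ω) ^ p ∂P
      = ∫⁻ x, ‖x‖ₑ ^ p ∂P.map (fun ω ↦ B t ω - B s ω) := by
        rw [lintegral_map (by fun_prop) increment_measurable]
        simp_rw [edist_comm (B s _), edist_eq_enorm_sub]
    _ = (((t : ℝ) - s).toNNReal : ℝ≥0∞) ^ (p / 2) * ∫⁻ x, ‖x‖ₑ ^ p ∂gaussianReal 0 1 := by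
        rw [hB.increment_law s t s.2.1 hst, lintegral_enorm_rpow_gaussianReal_zero hp.le]
    _ ≤ _ := by
        rw [edist_eq, mul_comm,
          ENNReal.coe_toNNReal (lintegral_enorm_rpow_gaussianReal_lt_top hp 0 1).ne]

lemma ae_ne_zero (hB : IsStandardBrownianMotion P B) {u : ℝ} (hu : 0 < u) :
    ∀ᵐ ω ∂P, B u ω ≠ 0 := by
  have law : P.map (B u) = gaussianReal 0 u.toNNReal := by
    simpa only [hB.start_at_zero, sub_zero] using hB.increment_law 0 u le_rfl hu.le
  have := nullSingletonClass_gaussianReal (μ := 0) (Real.toNNReal_pos.2 hu).ne'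
  refine ae_of_ae_map (hB.measurable u).aemeasurable (p := (· ≠ 0)) ?_
  rw [law]
  exact Measure.ae_ne _ 0

lemma ae_restrict_ae_ne_zero (hB : IsStandardBrownianMotion P B) (T : ℝ) :
    ∀ᵐ u ∂volume.restrict (Icc 0 T), ∀ᵐ ω ∂P, B u ω ≠ 0 := by
  filter_upwards [ae_restrict_mem measurableSet_Icc, Measure.ae_ne _ 0] with u hu hu0
  exact hB.ae_ne_zero (hu.1.lt_of_ne' hu0)

end IsStandardBrownianMotion

lemma exists_two_le_and_lt_half_sub_one_div {δ : ℝ} (hδ : δ ∈ Ioo (0 : ℝ) (1 / 2)) :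
    ∃ p : ℝ, 2 ≤ p ∧ δ < (p / 2 - 1) / p := by
  have hgap : 0 < 1 - 2 * δ := by linarith [hδ.2]
  refine ⟨4 / (1 - 2 * δ), ?_, ?_⟩
  · rw [le_div_iff₀ hgap]
    linarith [hδ.1]
  · rw [lt_div_iff₀ (by positivity), ← sub_pos]
    field_simp
    linarith

theorem statement18_general {Ω : Type*} [MeasurableSpace Ω] {P : Measure Ω} [SFinite P]
    {X : ℝ → Ω → ℝ} {T p q δ : ℝ} {M : ℝ≥0} (hT : 0 < T)
    (hX : IsKolmogorovProcess (fun t : Icc (0 : ℝ) T ↦ X t) P p q M)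
    (hXc : ∀ ω, ContinuousOn (X · ω) (Icc 0 T))
    (hne : ∀ᵐ u ∂volume.restrict (Icc 0 T), ∀ᵐ ω ∂P, X u ω ≠ 0)
    (hδ0 : 0 < δ) (hδ : δ < (q - 1) / p) :
    ∃ C : Ω → ℝ, Measurable C ∧ (∀ ω, 0 ≤ C ω) ∧ MemLp C (ENNReal.ofReal p) P ∧
      ∀ᵐ ω ∂P, ∀ ε > 0, ∀ t ∈ Icc (0 : ℝ) T,
        (1 / ε) * (∫ u in (0 : ℝ)..t,
            max (X u ω) 0 * (if X (min (u + ε) t) ω = 0 then (1 : ℝ) else 0))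
          ≤ C ω * ε ^ δ := by
  lift T to ℝ≥0 using hT.le
  lift δ to ℝ≥0 using hδ0.le
  obtain ⟨K, hKm, hKp, hK⟩ := exists_memLp_holderOnWith hT hX hXc hδ0 hδ
  refine ⟨fun ω ↦ K ω, hKm.coe_nnreal_real, fun ω ↦ (K ω).coe_nonneg, hKp, ?_⟩
  have path_ae_ne := ae_ae_ne_of_continuousOn T.coe_nonneg
    (fun t ht ↦ hX.measurable ⟨t, ht⟩) hXc hne
  filter_upwards [hK, path_ae_ne] with ω hholder hne_zero ε hε t ht
  have hsub : Icc 0 t ⊆ Icc (0 : ℝ) T := Icc_subset_Icc_right ht.2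
  exact inv_mul_integral_posPart_indicator_le hε ht.1 (hholder.mono hsub)
    (ae_restrict_of_ae_restrict_of_subset hsub hne_zero)

/-- For a standard Brownian motion, `T > 0` and `δ ∈ (0,1/2)`, there is a
nonnegative random variable `C` with `E[C²] < ∞` such that almost surely, for every
`ε ∈ (0,1]` and `t ∈ [0,T]`, `(1/ε) ∫_0^t B_u⁺ 1_{B_{(u+ε)∧t} = 0} du ≤ C ε^δ`. -/
theorem statement18 {Ω : Type*} [MeasurableSpace Ω] (P : Measure Ω) (B : ℝ → Ω → ℝ)
    (hB : IsStandardBrownianMotion P B) (T : ℝ) (hT : 0 < T)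
    (δ : ℝ) (hδ : δ ∈ Ioo (0:ℝ) (1/2)) :
    ∃ C : Ω → ℝ, Measurable C ∧ (∀ ω, 0 ≤ C ω) ∧
      Integrable (fun ω => (C ω) ^ 2) P ∧
      ∀ᵐ ω ∂P, ∀ ε ∈ Ioc (0:ℝ) 1, ∀ t ∈ Icc (0:ℝ) T,
        (1 / ε) * (∫ u in (0:ℝ)..t,
            max (B u ω) 0 * (if B (min (u + ε) t) ω = 0 then (1:ℝ) else 0))
          ≤ C ω * ε ^ δ := by
  have := hB.isProbabilityMeasure
  obtain ⟨p, hp, hδp⟩ := exists_two_le_and_lt_half_sub_one_div hδ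
  obtain ⟨C, hCm, hC0, hCp, hC⟩ := statement18_general hT (hB.isKolmogorovProcess T (by linarith))
    (fun ω ↦ (hB.continuous_paths ω).mono Icc_subset_Ici_self) (hB.ae_restrict_ae_ne_zero T)
    hδ.1 hδp
  have hC2 : MemLp C 2 P := hCp.mono_exponent (by simpa using ENNReal.ofReal_le_ofReal hp)
  exact ⟨C, hCm, hC0, hC2.integrable_sq, hC.mono fun ω h ε hε ↦ h ε hε.1⟩
end
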